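/- arXiv:2004.06712 — 3 statements merged into one kernel-verified Lean document; each statement's English description precedes it below -/
import Mathlib

section
/- Let (Ω, 𝒜, μ) be a σ-finite measure space and let {T_u : u ∈ ℝ₊^d} be a semigroup of positive Dunford–Schwartz operators that is L¹-continuous in the interior of ℝ₊^d. Then for every f ∈ R_μ the averages A_t(f) = t^{−d} ∫_{(0,t]^d} T_u(f) du converge almost uniformly as t → ∞ to some f̂ ∈ R_μ. -/
open MeasureTheory Filter Set ENNReal Topology

variable {Ω : Type*} [MeasurableSpace Ω]

/-- `f` belongs to `L¹(μ) + L^∞(μ)`. -/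
def MemL1pLinf (μ : Measure Ω) (f : Ω →ₘ[μ] ℝ) : Prop :=
  ∃ g h : Ω →ₘ[μ] ℝ, eLpNorm g 1 μ ≠ ∞ ∧ eLpNorm h ⊤ μ ≠ ∞ ∧ f = g + h

/-- A positive Dunford–Schwartz operator: linear and positive on `L¹+L^∞`,
contracting both the `L¹`- and `L^∞`-norms. -/
structure IsPosDS (μ : Measure Ω) (T : (Ω →ₘ[μ] ℝ) → (Ω →ₘ[μ] ℝ)) : Prop where
  map_add : ∀ f g, MemL1pLinf μ f → MemL1pLinf μ g → T (f + g) = T f + T g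
  map_smul : ∀ (c : ℝ) (f), MemL1pLinf μ f → T (c • f) = c • T f
  map_pos : ∀ f, MemL1pLinf μ f → 0 ≤ f → 0 ≤ T f
  norm_one : ∀ f, MemL1pLinf μ f → eLpNorm (T f) 1 μ ≤ eLpNorm f 1 μ
  norm_top : ∀ f, MemL1pLinf μ f → eLpNorm (T f) ⊤ μ ≤ eLpNorm f ⊤ μ

/-- The Cesàro averages `A_n(f) = (1/n) ∑_{k<n} T^k f`. -/
noncomputable def cesaro (μ : Measure Ω) (T : (Ω →ₘ[μ] ℝ) → (Ω →ₘ[μ] ℝ)) (n : ℕ)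
    (f : Ω →ₘ[μ] ℝ) : Ω →ₘ[μ] ℝ :=
  (n : ℝ)⁻¹ • ∑ k ∈ Finset.range n, T^[k] f

/-- Almost uniform convergence of a net `F` to `f`. -/
def AuTendsto {ι : Type*} (μ : Measure Ω) (l : Filter ι) (F : ι → Ω →ₘ[μ] ℝ)
    (f : Ω →ₘ[μ] ℝ) : Prop :=
  ∀ ε : ℝ, 0 < ε → ∃ E : Set Ω, MeasurableSet E ∧ μ Eᶜ ≤ ENNReal.ofReal ε ∧
    Tendsto (fun i => eLpNorm (E.indicator (⇑(F i - f))) ⊤ μ) l (𝓝 0)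

/-- `R_μ`: elements of `L¹+L^∞` whose distribution tails are finite. -/
def MemRmu (μ : Measure Ω) (f : Ω →ₘ[μ] ℝ) : Prop :=
  MemL1pLinf μ f ∧ ∀ lam : ℝ, 0 < lam → μ {ω | lam < |f ω|} < ∞

section
lemma memL1pLinf_of_one {μ : Measure Ω} {f : Ω →ₘ[μ] ℝ} (h : eLpNorm f 1 μ ≠ ∞) :
    MemL1pLinf μ f :=
  ⟨f, 0, h, by simp [eLpNorm_congr_ae AEEqFun.coeFn_zero], by simp⟩

lemma memL1pLinf_of_top {μ : Measure Ω} {f : Ω →ₘ[μ] ℝ} (h : eLpNorm f ⊤ μ ≠ ∞) :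
    MemL1pLinf μ f :=
  ⟨0, f, by simp [eLpNorm_congr_ae AEEqFun.coeFn_zero], h, by simp⟩

/-- The space `L¹ + L^∞` as a submodule. -/
def VL (μ : Measure Ω) : Submodule ℝ (Ω →ₘ[μ] ℝ) where
  carrier := {f | MemL1pLinf μ f}
  add_mem' := by
    rintro a b ⟨g, h, hg, hh, rfl⟩ ⟨g', h', hg', hh', rfl⟩
    refine ⟨g + g', h + h', ?_, ?_, by abel⟩
    · rw [eLpNorm_congr_ae (AEEqFun.coeFn_add g g')]
      exact ne_of_lt (lt_of_le_of_lt (eLpNorm_add_le g.aestronglyMeasurable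
        g'.aestronglyMeasurable le_rfl) (ENNReal.add_lt_top.2 ⟨hg.lt_top, hg'.lt_top⟩))
    · rw [eLpNorm_congr_ae (AEEqFun.coeFn_add h h')]
      exact ne_of_lt (lt_of_le_of_lt (eLpNorm_add_le h.aestronglyMeasurable
        h'.aestronglyMeasurable le_top) (ENNReal.add_lt_top.2 ⟨hh.lt_top, hh'.lt_top⟩))
  zero_mem' := memL1pLinf_of_one (by simp [eLpNorm_congr_ae AEEqFun.coeFn_zero])
  smul_mem' := by
    rintro c a ⟨g, h, hg, hh, rfl⟩
    refine ⟨c • g, c • h, ?_, ?_, by simp⟩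
    · rw [eLpNorm_congr_ae (AEEqFun.coeFn_smul c g), eLpNorm_const_smul]
      exact ENNReal.mul_ne_top (by simp) hg
    · rw [eLpNorm_congr_ae (AEEqFun.coeFn_smul c h), eLpNorm_const_smul]
      exact ENNReal.mul_ne_top (by simp) hh

/-- representative function -/
noncomputable def fn {μ : Measure Ω} (f : VL μ) : Ω → ℝ := ⇑(f : Ω →ₘ[μ] ℝ)

section
variable {μ : Measure Ω}

lemma fn_aesm (f : VL μ) : AEStronglyMeasurable (fn f) μ := AEEqFun.aestronglyMeasurable _
lemma fn_meas (f : VL μ) : Measurable (fn f) :=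
  (AEEqFun.stronglyMeasurable (f : Ω →ₘ[μ] ℝ)).measurable
lemma fn_add (f g : VL μ) : fn (f + g) =ᵐ[μ] fun ω => fn f ω + fn g ω :=
  AEEqFun.coeFn_add _ _
lemma fn_sub (f g : VL μ) : fn (f - g) =ᵐ[μ] fun ω => fn f ω - fn g ω :=
  AEEqFun.coeFn_sub _ _
lemma fn_neg (f : VL μ) : fn (-f) =ᵐ[μ] fun ω => - fn f ω :=
  AEEqFun.coeFn_neg _
lemma fn_smul (c : ℝ) (f : VL μ) : fn (c • f) =ᵐ[μ] fun ω => c * fn f ω :=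
  AEEqFun.coeFn_smul _ _
lemma fn_zero : fn (0 : VL μ) =ᵐ[μ] fun _ => 0 := AEEqFun.coeFn_zero
lemma fn_sum {ι : Type*} (s : Finset ι) (f : ι → VL μ) :
    fn (∑ i ∈ s, f i) =ᵐ[μ] fun ω => ∑ i ∈ s, fn (f i) ω := by
  classical
  induction s using Finset.induction_on with
  | empty => simpa using fn_zero
  | insert a s ha ih =>
    rw [Finset.sum_insert ha]
    filter_upwards [fn_add (f a) (∑ i ∈ s, f i), ih] with ω h1 h2
    rw [h1, h2, Finset.sum_insert ha]
lemma fn_ext {f g : VL μ} (h : fn f =ᵐ[μ] fn g) : f = g :=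
  Subtype.ext (AEEqFun.ext h)

/-- if `h` is dominated by integrable + bounded. -/
lemma mk_mem_of_top {h : Ω → ℝ} (hm : AEStronglyMeasurable h μ) {c : ℝ} (hc : ∀ᵐ ω ∂μ, |h ω| ≤ c) :
    AEEqFun.mk h hm ∈ VL μ := by
  apply memL1pLinf_of_top
  rw [eLpNorm_congr_ae (AEEqFun.coeFn_mk h hm)]
  exact (memLp_top_of_bound hm c hc).2.ne

lemma mk_mem_of_one {h : Ω → ℝ} (hi : Integrable h μ) :
    AEEqFun.mk h hi.1 ∈ VL μ := by
  apply memL1pLinf_of_one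
  rw [eLpNorm_congr_ae (AEEqFun.coeFn_mk h hi.1)]
  exact (memLp_one_iff_integrable.2 hi).2.ne

lemma exists_fn_of_bdd {h : Ω → ℝ} (hm : AEStronglyMeasurable h μ) {c : ℝ}
    (hc : ∀ᵐ ω ∂μ, |h ω| ≤ c) : ∃ f : VL μ, fn f =ᵐ[μ] h :=
  ⟨⟨_, mk_mem_of_top hm hc⟩, AEEqFun.coeFn_mk h hm⟩

lemma exists_fn_of_int {h : Ω → ℝ} (hi : Integrable h μ) : ∃ f : VL μ, fn f =ᵐ[μ] h :=
  ⟨⟨_, mk_mem_of_one hi⟩, AEEqFun.coeFn_mk h hi.1⟩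

lemma exists_fn_of_L2 {h : Ω → ℝ} (hi : MemLp h 2 μ) : ∃ f : VL μ, fn f =ᵐ[μ] h := by
  have hm := hi.1
  obtain ⟨h', hm', he⟩ := hm
  have hi' : MemLp h' 2 μ := (memLp_congr_ae he).1 hi
  have hS : MeasurableSet {ω | 1 < |h' ω|} := measurableSet_lt measurable_const hm'.measurable.abs
  have h1 : Integrable ({ω | 1 < |h' ω|}.indicator h') μ := by
    refine Integrable.mono' (g := fun ω => h' ω ^ 2) (hi'.integrable_sq)
      (hm'.aestronglyMeasurable.indicator hS) (ae_of_all _ fun ω => ?_)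
    by_cases hω : 1 < |h' ω|
    · rw [indicator_of_mem (by exact hω), Real.norm_eq_abs, ← sq_abs]; nlinarith
    · rw [indicator_of_notMem (by exact hω)]; simp; positivity
  have h2 : ∀ᵐ ω ∂μ, |({ω | 1 < |h' ω|}ᶜ.indicator h') ω| ≤ 1 := ae_of_all _ fun ω => by
    by_cases hω : 1 < |h' ω|
    · rw [indicator_of_notMem (by simpa using hω)]; simp
    · rw [indicator_of_mem (by exact hω)]; simpa using hω
  obtain ⟨f1, hf1⟩ := exists_fn_of_int h1
  obtain ⟨f2, hf2⟩ := exists_fn_of_bdd (hm'.aestronglyMeasurable.indicator hS.compl) h2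
  refine ⟨f1 + f2, ?_⟩
  filter_upwards [fn_add f1 f2, hf1, hf2, he] with ω a b c e
  rw [a, b, c, e]
  exact congrFun (indicator_self_add_compl _ h') ω

variable (μ) in
lemma exists_constV (c : ℝ) : ∃ f : VL μ, fn f =ᵐ[μ] fun _ => c :=
  exists_fn_of_bdd aestronglyMeasurable_const (c := |c|) (by simp)

lemma exists_abs (f : VL μ) : ∃ g : VL μ, fn g =ᵐ[μ] fun ω => |fn f ω| := by
  obtain ⟨f, g, h, hg, hh, rfl⟩ := f
  have hF : fn (⟨g + h, g, h, hg, hh, rfl⟩ : VL μ) =ᵐ[μ] fun ω => g ω + h ω :=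
    AEEqFun.coeFn_add g h
  have hgi : Integrable g μ := memLp_one_iff_integrable.1 ⟨g.aestronglyMeasurable, hg.lt_top⟩
  have hgh : MemLp h ⊤ μ := ⟨h.aestronglyMeasurable, hh.lt_top⟩
  obtain ⟨c, hc⟩ : ∃ c : ℝ, ∀ᵐ ω ∂μ, |h ω| ≤ c := by
    refine ⟨(eLpNorm h ⊤ μ).toReal, ?_⟩
    have := ae_le_eLpNormEssSup (f := h) (μ := μ)
    filter_upwards [this] with ω hω
    rw [eLpNorm_exponent_top] at hh ⊢
    rw [← ENNReal.ofReal_le_iff_le_toReal hh, ← Real.norm_eq_abs, ofReal_norm]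
    exact hω
  obtain ⟨f1, hf1⟩ : ∃ f : VL μ, fn f =ᵐ[μ] fun ω => |g ω + h ω| - |h ω| := by
    apply exists_fn_of_int
    refine Integrable.mono' hgi.abs ((hgi.1.add hgh.1).norm.sub hgh.1.norm) (ae_of_all _ fun ω => ?_)
    rw [Real.norm_eq_abs]
    have := abs_abs_sub_abs_le (g ω + h ω) (h ω)
    simpa using this
  obtain ⟨f2, hf2⟩ := exists_fn_of_bdd (μ := μ) (h := fun ω => |h ω|) hgh.1.norm (c := c) (by simpa using hc)
  refine ⟨f1 + f2, ?_⟩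
  filter_upwards [fn_add f1 f2, hf1, hf2, hF] with ω a b c e
  rw [a, b, c, e]; ring

/-- positive Dunford-Schwartz operators on `VL μ` -/
structure PDS (U : Module.End ℝ (VL μ)) : Prop where
  pos : ∀ f : VL μ, (∀ᵐ ω ∂μ, 0 ≤ fn f ω) → ∀ᵐ ω ∂μ, 0 ≤ fn (U f) ω
  one : ∀ f : VL μ, (∀ᵐ ω ∂μ, 0 ≤ fn f ω) →
    ∫⁻ ω, ENNReal.ofReal (fn (U f) ω) ∂μ ≤ ∫⁻ ω, ENNReal.ofReal (fn f ω) ∂μ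
  sub : ∀ (c : ℝ), 0 ≤ c → ∀ f : VL μ, (∀ᵐ ω ∂μ, fn f ω ≤ c) → ∀ᵐ ω ∂μ, fn (U f) ω ≤ c

lemma pos_mono {U : Module.End ℝ (VL μ)}
    (hU : ∀ f : VL μ, (∀ᵐ ω ∂μ, 0 ≤ fn f ω) → ∀ᵐ ω ∂μ, 0 ≤ fn (U f) ω) {f g : VL μ}
    (h : ∀ᵐ ω ∂μ, fn f ω ≤ fn g ω) : ∀ᵐ ω ∂μ, fn (U f) ω ≤ fn (U g) ω := by
  have := hU (g - f) (by filter_upwards [h, fn_sub g f] with ω a b; rw [b]; linarith)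
  rw [map_sub] at this
  filter_upwards [this, fn_sub (U g) (U f)] with ω a b
  rw [b] at a; linarith

lemma PDS.mono {U : Module.End ℝ (VL μ)} (hU : PDS U) {f g : VL μ}
    (h : ∀ᵐ ω ∂μ, fn f ω ≤ fn g ω) : ∀ᵐ ω ∂μ, fn (U f) ω ≤ fn (U g) ω := pos_mono hU.pos h

lemma PDS.id : PDS (1 : Module.End ℝ (VL μ)) :=
  ⟨fun _ h => h, fun _ _ => le_rfl, fun _ _ _ h => h⟩

lemma PDS.mul {U W : Module.End ℝ (VL μ)} (hU : PDS U) (hW : PDS W) : PDS (U * W) :=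
  ⟨fun f h => hU.pos _ (hW.pos f h), fun f h => (hU.one _ (hW.pos f h)).trans (hW.one f h),
    fun c hc f h => hU.sub c hc _ (hW.sub c hc f h)⟩

lemma PDS.pow {U : Module.End ℝ (VL μ)} (hU : PDS U) (n : ℕ) : PDS (U ^ n) := by
  induction n with
  | zero => exact PDS.id
  | succ n ih => rw [pow_succ]; exact ih.mul hU

lemma fn_sum_smul_apply {ι : Type*} (s : Finset ι) (w : ι → ℝ) (U : ι → Module.End ℝ (VL μ))
    (f : VL μ) :
    fn ((∑ i ∈ s, w i • U i) f) =ᵐ[μ] fun ω => ∑ i ∈ s, w i * fn (U i f) ω := by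
  rw [LinearMap.sum_apply]
  have : ∀ᵐ ω ∂μ, ∀ i ∈ s, fn ((w i • U i) f) ω = w i * fn (U i f) ω := by
    rw [Filter.eventually_all_finset]
    intro i _
    exact fn_smul (w i) (U i f)
  filter_upwards [fn_sum s (fun i => (w i • U i) f), this] with ω a b
  rw [a]
  exact Finset.sum_congr rfl b

lemma PDS.sum {ι : Type*} (s : Finset ι) (w : ι → ℝ) (U : ι → Module.End ℝ (VL μ))
    (hw : ∀ i ∈ s, 0 ≤ w i) (hw1 : ∑ i ∈ s, w i ≤ 1) (hU : ∀ i ∈ s, PDS (U i)) :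
    PDS (∑ i ∈ s, w i • U i) := by
  have key := fn_sum_smul_apply s w U
  refine ⟨fun f h => ?_, fun f h => ?_, fun c hc f h => ?_⟩
  · have : ∀ᵐ ω ∂μ, ∀ i ∈ s, 0 ≤ fn (U i f) ω := by
      rw [Filter.eventually_all_finset]
      exact fun i hi => (hU i hi).pos f h
    filter_upwards [key f, this] with ω a b
    rw [a]
    exact Finset.sum_nonneg fun i hi => mul_nonneg (hw i hi) (b i hi)
  · calc ∫⁻ ω, ENNReal.ofReal (fn ((∑ i ∈ s, w i • U i) f) ω) ∂μ
        ≤ ∫⁻ ω, ∑ i ∈ s, ENNReal.ofReal (w i) * ENNReal.ofReal (fn (U i f) ω) ∂μ := by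
          refine lintegral_mono_ae ?_
          have : ∀ᵐ ω ∂μ, ∀ i ∈ s, 0 ≤ fn (U i f) ω := by
            rw [Filter.eventually_all_finset]
            exact fun i hi => (hU i hi).pos f h
          filter_upwards [key f, this] with ω a b
          rw [a, ENNReal.ofReal_sum_of_nonneg fun i hi => mul_nonneg (hw i hi) (b i hi)]
          exact Finset.sum_le_sum fun i hi => (ENNReal.ofReal_mul (hw i hi)).le
      _ = ∑ i ∈ s, ENNReal.ofReal (w i) * ∫⁻ ω, ENNReal.ofReal (fn (U i f) ω) ∂μ := by
          rw [lintegral_finsetSum _ fun i _ => ((fn_meas _).ennreal_ofReal.const_mul _)]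
          exact Finset.sum_congr rfl fun i _ => lintegral_const_mul _ (fn_meas _).ennreal_ofReal
      _ ≤ ∑ i ∈ s, ENNReal.ofReal (w i) * ∫⁻ ω, ENNReal.ofReal (fn f ω) ∂μ :=
          Finset.sum_le_sum fun i hi => mul_le_mul' le_rfl ((hU i hi).one f h)
      _ = ENNReal.ofReal (∑ i ∈ s, w i) * ∫⁻ ω, ENNReal.ofReal (fn f ω) ∂μ := by
          rw [← Finset.sum_mul, ENNReal.ofReal_sum_of_nonneg hw]
      _ ≤ 1 * ∫⁻ ω, ENNReal.ofReal (fn f ω) ∂μ := by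
          gcongr; simpa using ENNReal.ofReal_le_ofReal hw1
      _ = _ := one_mul _
  · have : ∀ᵐ ω ∂μ, ∀ i ∈ s, fn (U i f) ω ≤ c := by
      rw [Filter.eventually_all_finset]
      exact fun i hi => (hU i hi).sub c hc f h
    filter_upwards [key f, this] with ω a b
    rw [a]
    calc ∑ i ∈ s, w i * fn (U i f) ω ≤ ∑ i ∈ s, w i * c :=
          Finset.sum_le_sum fun i hi => mul_le_mul_of_nonneg_left (b i hi) (hw i hi)
      _ = (∑ i ∈ s, w i) * c := by rw [Finset.sum_mul]
      _ ≤ c := by nlinarith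

lemma PDS.abs_le {U : Module.End ℝ (VL μ)} (hU : PDS U) {f g : VL μ}
    (h : ∀ᵐ ω ∂μ, |fn f ω| ≤ fn g ω) : ∀ᵐ ω ∂μ, |fn (U f) ω| ≤ fn (U g) ω := by
  have h1 := hU.mono (f := f) (g := g) (by filter_upwards [h] with ω a using (le_abs_self _).trans a)
  have h2 := hU.mono (f := -f) (g := g)
    (by filter_upwards [h, fn_neg f] with ω a b; rw [b]; exact (neg_le_abs _).trans a)
  rw [map_neg] at h2
  filter_upwards [h1, h2, fn_neg (U f)] with ω a b c
  rw [c] at b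
  exact abs_le'.2 ⟨a, b⟩

lemma PDS.abs_sub {U : Module.End ℝ (VL μ)} (hU : PDS U) {f : VL μ} {c : ℝ} (hc : 0 ≤ c)
    (h : ∀ᵐ ω ∂μ, |fn f ω| ≤ c) : ∀ᵐ ω ∂μ, |fn (U f) ω| ≤ c := by
  obtain ⟨g, hg⟩ := exists_constV μ c
  filter_upwards [hU.abs_le (f := f) (g := g) (by filter_upwards [h, hg] with ω a b; rwa [b]),
    hU.sub c hc g (hg.le)] with ω a b using a.trans b

/-- Jensen -/
lemma PDS.sq_le {U : Module.End ℝ (VL μ)} (hU : PDS U) {f g : VL μ}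
    (h : ∀ᵐ ω ∂μ, (fn f ω) ^ 2 ≤ fn g ω) : ∀ᵐ ω ∂μ, (fn (U f) ω) ^ 2 ≤ fn (U g) ω := by
  have key : ∀ a : ℚ, ∀ᵐ ω ∂μ, 2 * (a : ℝ) * fn (U f) ω - fn (U g) ω ≤ (a : ℝ) ^ 2 := by
    intro a
    have := hU.sub ((a : ℝ) ^ 2) (sq_nonneg _) ((2 * (a : ℝ)) • f - g) (by
      filter_upwards [h, fn_sub ((2 * (a : ℝ)) • f) g, fn_smul (2 * (a : ℝ)) f] with ω x y z
      rw [y, z]; nlinarith [sq_nonneg ((a : ℝ) - fn f ω)])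
    rw [map_sub, map_smul] at this
    filter_upwards [this, fn_sub ((2 * (a : ℝ)) • U f) (U g), fn_smul (2 * (a : ℝ)) (U f)] with ω x y z
    rwa [y, z] at x
  rw [← ae_all_iff] at key
  filter_upwards [key] with ω hω
  have hcl : IsClosed {a : ℝ | 2 * a * fn (U f) ω - fn (U g) ω ≤ a ^ 2} :=
    isClosed_le (by fun_prop) (by fun_prop)
  have : fn (U f) ω ∈ {a : ℝ | 2 * a * fn (U f) ω - fn (U g) ω ≤ a ^ 2} := by
    have hd : closure (Set.range ((↑) : ℚ → ℝ)) = univ := Rat.denseRange_cast.closure_range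
    have hsub : closure (Set.range ((↑) : ℚ → ℝ)) ⊆ {a : ℝ | 2 * a * fn (U f) ω - fn (U g) ω ≤ a ^ 2} :=
      hcl.closure_subset_iff.2 (by rintro _ ⟨a, rfl⟩; exact hω a)
    exact hsub (by rw [hd]; trivial)
  simp only [mem_ofPred_eq] at this
  nlinarith

lemma IsPosDS.mem {T : (Ω →ₘ[μ] ℝ) → (Ω →ₘ[μ] ℝ)} (hT : IsPosDS μ T) {f : Ω →ₘ[μ] ℝ}
    (hf : MemL1pLinf μ f) : MemL1pLinf μ (T f) := by
  obtain ⟨g, h, hg, hh, rfl⟩ := hf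
  have h1 := memL1pLinf_of_one hg
  have h2 := memL1pLinf_of_top hh
  refine ⟨T g, T h, ?_, ?_, hT.map_add _ _ h1 h2⟩
  · exact ne_top_of_le_ne_top hg (hT.norm_one g h1)
  · exact ne_top_of_le_ne_top hh (hT.norm_top h h2)

/-- endomorphism from `IsPosDS` -/
noncomputable def toEnd {T : (Ω →ₘ[μ] ℝ) → (Ω →ₘ[μ] ℝ)} (hT : IsPosDS μ T) : Module.End ℝ (VL μ) where
  toFun f := ⟨T f, hT.mem f.2⟩
  map_add' f g := Subtype.ext (hT.map_add _ _ f.2 g.2)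
  map_smul' c f := Subtype.ext (hT.map_smul c _ f.2)

lemma lint_eq (f : VL μ) (h : ∀ᵐ ω ∂μ, 0 ≤ fn f ω) :
    eLpNorm (fn f) 1 μ = ∫⁻ ω, ENNReal.ofReal (fn f ω) ∂μ := by
  rw [eLpNorm_one_eq_lintegral_enorm]
  refine lintegral_congr_ae ?_
  filter_upwards [h] with ω a
  rw [Real.enorm_eq_ofReal a]

lemma toEnd_pds {T : (Ω →ₘ[μ] ℝ) → (Ω →ₘ[μ] ℝ)} (hT : IsPosDS μ T) : PDS (toEnd hT) := by
  have hp : ∀ f : VL μ, (∀ᵐ ω ∂μ, 0 ≤ fn f ω) → ∀ᵐ ω ∂μ, 0 ≤ fn (toEnd hT f) ω := by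
    intro f h
    have h0 : (0 : Ω →ₘ[μ] ℝ) ≤ f := by
      rw [← AEEqFun.coeFn_le]
      filter_upwards [h, AEEqFun.coeFn_zero (α := Ω) (β := ℝ) (μ := μ)] with ω a b
      rw [b]; exact a
    have := hT.map_pos f f.2 h0
    rw [← AEEqFun.coeFn_le] at this
    filter_upwards [this, AEEqFun.coeFn_zero (α := Ω) (β := ℝ) (μ := μ)] with ω a b
    rw [b] at a; exact a
  refine ⟨hp, fun f h => ?_, fun c hc f h => ?_⟩
  · rw [← lint_eq f h, ← lint_eq _ (hp f h)]
    exact hT.norm_one f f.2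
  · obtain ⟨g, hg⟩ := exists_constV μ c
    have h1 := pos_mono hp (f := f) (g := g) (by filter_upwards [h, hg] with ω a b; rwa [b])
    have h2 := hT.norm_top g g.2
    have h3 : eLpNorm (fn g) ⊤ μ ≤ ENNReal.ofReal c := by
      rw [eLpNorm_congr_ae hg, eLpNorm_exponent_top]
      refine eLpNormEssSup_le_of_ae_enorm_bound (ae_of_all _ fun ω => ?_)
      rw [Real.enorm_eq_ofReal hc]
    have h4 : eLpNormEssSup (fn (toEnd hT g)) μ ≤ ENNReal.ofReal c := by
      rw [← eLpNorm_exponent_top]; exact h2.trans h3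
    filter_upwards [h1, ae_le_eLpNormEssSup (f := fn (toEnd hT g)) (μ := μ)] with ω a b
    refine a.trans ((le_abs_self _).trans ?_)
    have := b.trans h4
    rwa [Real.enorm_eq_ofReal_abs, ENNReal.ofReal_le_ofReal_iff hc] at this
end

end

section
section
variable {μ : Measure Ω}

lemma exists_max (f : VL μ) : ∃ g : VL μ, fn g =ᵐ[μ] fun ω => max (fn f ω) 0 := by
  obtain ⟨a, ha⟩ := exists_abs f
  refine ⟨(1/2 : ℝ) • (f + a), ?_⟩
  filter_upwards [ha, fn_smul (1/2 : ℝ) (f + a), fn_add f a] with ω x y z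
  rw [y, z, x]
  rcases le_total 0 (fn f ω) with h | h
  · rw [max_eq_left h, abs_of_nonneg h]; ring
  · rw [max_eq_right h, abs_of_nonpos h]; ring

lemma hopf {U : Module.End ℝ (VL μ)} (hU : PDS U) {q : VL μ} (hq : ∀ᵐ ω ∂μ, 0 ≤ fn q ω)
    (hqi : ∫⁻ ω, ENNReal.ofReal (fn q ω) ∂μ ≠ ∞) {lam : ℝ} (hl : 0 < lam) (N : ℕ) :
    ∃ S : Set Ω, MeasurableSet S ∧ ENNReal.ofReal lam * μ S ≤ ∫⁻ ω, ENNReal.ofReal (fn q ω) ∂μ ∧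
      ∀ m ≤ N, ∀ᵐ ω ∂μ, (m : ℝ) * lam < fn ((∑ j ∈ Finset.range m, U ^ j) q) ω → ω ∈ S := by
  obtain ⟨cl, hcl⟩ := exists_constV μ lam
  choose step hstep using fun m : VL μ => exists_max (q + U m - cl)
  have hstep' : ∀ m, ∀ᵐ ω ∂μ, fn (step m) ω = max (fn q ω + fn (U m) ω - lam) 0 := by
    intro m
    filter_upwards [hstep m, fn_sub (q + U m) cl, fn_add q (U m), hcl] with ω a b c d
    rw [a, b, c, d]
  let M : ℕ → VL μ := fun n => Nat.rec 0 (fun _ m => step m) n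
  have hM0 : M 0 = 0 := rfl
  have hM1 : ∀ n, M (n + 1) = step (M n) := fun n => rfl
  have hMn : ∀ n, ∀ᵐ ω ∂μ, 0 ≤ fn (M n) ω := by
    intro n
    cases n with
    | zero => rw [hM0]; filter_upwards [fn_zero (μ := μ)] with ω h; rw [h]
    | succ n => rw [hM1]; filter_upwards [hstep' (M n)] with ω h; rw [h]; exact le_max_right _ _
  have hMm : ∀ n, ∀ᵐ ω ∂μ, fn (M n) ω ≤ fn (M (n + 1)) ω := by
    intro n
    induction n with
    | zero =>
      filter_upwards [hMn 1, fn_zero (μ := μ)] with ω h h'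
      rw [hM0, h']; exact h
    | succ n ih =>
      have := hU.mono ih
      rw [hM1 (n + 1), hM1 n] at *
      filter_upwards [this, hstep' (M n), hstep' (step (M n))] with ω a b c
      rw [b, c]
      exact max_le_max (by linarith) le_rfl
  have hMmono : ∀ N, ∀ m ≤ N, ∀ᵐ ω ∂μ, fn (M m) ω ≤ fn (M N) ω := by
    intro N m hm
    induction N, hm using Nat.le_induction with
    | base => exact ae_of_all _ fun _ => le_rfl
    | succ n _ ih => filter_upwards [ih, hMm n] with ω a b using a.trans b
  have hMi : ∀ n, ∫⁻ ω, ENNReal.ofReal (fn (M n) ω) ∂μ ≠ ∞ := by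
    intro n
    induction n with
    | zero =>
      rw [hM0, lintegral_congr_ae (g := fun _ => 0)]
      · simp
      · filter_upwards [fn_zero (μ := μ)] with ω h; rw [h]; simp
    | succ n ih =>
      have h1 : ∫⁻ ω, ENNReal.ofReal (fn (M (n+1)) ω) ∂μ ≤
          ∫⁻ ω, (ENNReal.ofReal (fn q ω) + ENNReal.ofReal (fn (U (M n)) ω)) ∂μ := by
        refine lintegral_mono_ae ?_
        rw [hM1]
        filter_upwards [hstep' (M n), hq, hU.pos _ (hMn n)] with ω a b c
        rw [a, ← ENNReal.ofReal_add b c]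
        refine ENNReal.ofReal_le_ofReal (max_le ?_ ?_) <;> linarith
      rw [lintegral_add_left (fn_meas q).ennreal_ofReal] at h1
      exact ne_top_of_le_ne_top (ENNReal.add_ne_top.2 ⟨hqi, ne_top_of_le_ne_top ih (hU.one _ (hMn n))⟩) h1
  refine ⟨{ω | 0 < fn (M N) ω}, measurableSet_lt measurable_const (fn_meas _), ?_, ?_⟩
  · cases N with
    | zero =>
      have : μ {ω | 0 < fn (M 0) ω} = 0 := by
        have h : ∀ᵐ ω ∂μ, ¬ (0 < fn (M 0) ω) := by
          rw [hM0]; filter_upwards [fn_zero (μ := μ)] with ω h; rw [h]; simp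
        simpa [ae_iff] using h
      rw [this]; simp
    | succ n =>
      have hS : MeasurableSet {ω | 0 < fn (M (n+1)) ω} :=
        measurableSet_lt measurable_const (fn_meas _)
      have h1 : ∫⁻ ω, (ENNReal.ofReal (fn (M (n+1)) ω) +
          {ω | 0 < fn (M (n+1)) ω}.indicator (fun _ => ENNReal.ofReal lam) ω) ∂μ ≤
          ∫⁻ ω, (ENNReal.ofReal (fn q ω) + ENNReal.ofReal (fn (U (M n)) ω)) ∂μ := by
        refine lintegral_mono_ae ?_
        filter_upwards [hstep' (M n), hq, hU.pos _ (hMn n)] with ω a b c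
        rw [← hM1] at a
        rw [← ENNReal.ofReal_add b c]
        by_cases h : 0 < fn (M (n+1)) ω
        · rw [indicator_of_mem (by exact h), ← ENNReal.ofReal_add h.le hl.le]
          refine ENNReal.ofReal_le_ofReal ?_
          rcases max_choice (fn q ω + fn (U (M n)) ω - lam) 0 with h' | h' <;> rw [h'] at a <;> linarith
        · rw [indicator_of_notMem (by exact h), ENNReal.ofReal_of_nonpos (not_lt.1 h)]
          simp
      rw [lintegral_add_left (fn_meas _).ennreal_ofReal, lintegral_add_left (fn_meas q).ennreal_ofReal,
        lintegral_indicator_const hS] at h1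
      have h2 := hU.one _ (hMn n)
      have h3 : ∫⁻ ω, ENNReal.ofReal (fn (M n) ω) ∂μ ≤ ∫⁻ ω, ENNReal.ofReal (fn (M (n+1)) ω) ∂μ :=
        lintegral_mono_ae (by filter_upwards [hMm n] with ω a using ENNReal.ofReal_le_ofReal a)
      have h4 := h1.trans (add_le_add le_rfl (h2.trans h3))
      rw [add_comm] at h4
      exact (ENNReal.add_le_add_iff_right (hMi (n+1))).1 h4
  · have key : ∀ m, ∀ᵐ ω ∂μ, fn ((∑ j ∈ Finset.range m, U ^ j) q) ω ≤ fn (M m) ω + m * lam := by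
      intro m
      induction m with
      | zero =>
        simp only [Finset.range_zero, Finset.sum_empty, LinearMap.zero_apply, hM0]
        filter_upwards [] with ω; simp
      | succ m ih =>
        obtain ⟨cm, hcm⟩ := exists_constV μ (m * lam)
        have h1 := hU.mono (f := (∑ j ∈ Finset.range m, U ^ j) q) (g := M m + cm) (by
          filter_upwards [ih, fn_add (M m) cm, hcm] with ω a b c
          rw [b, c]; exact a)
        have h2 := hU.sub (m * lam) (by positivity) cm hcm.le
        have h3 : (∑ j ∈ Finset.range (m+1), U ^ j) q = q + U ((∑ j ∈ Finset.range m, U ^ j) q) := by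
          rw [Finset.sum_range_succ', add_comm]
          simp only [pow_zero, LinearMap.add_apply, Module.End.one_apply, LinearMap.sum_apply, map_sum,
            pow_succ', Module.End.mul_apply]
        rw [h3, hM1]
        rw [map_add] at h1
        filter_upwards [h1, h2, hstep' (M m), fn_add q (U ((∑ j ∈ Finset.range m, U ^ j) q)),
          fn_add (U (M m)) (U cm)] with ω a b c d e
        rw [c, d]
        rw [e] at a
        have := le_max_left (fn q ω + fn (U (M m)) ω - lam) 0
        have hc : ((m + 1 : ℕ) : ℝ) = m + 1 := Nat.cast_succ m
        rw [hc]
        linarith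
    intro m hm
    filter_upwards [key m, hMmono N m hm] with ω a b h
    show 0 < fn (M N) ω
    linarith
end

end

section
open Polynomial

/-- nonnegative coefficients -/
def NNc (p : ℝ[X]) : Prop := ∀ k, 0 ≤ p.coeff k

lemma NNc.add {p q : ℝ[X]} (hp : NNc p) (hq : NNc q) : NNc (p + q) := fun k => by
  rw [coeff_add]; exact add_nonneg (hp k) (hq k)
lemma NNc.mul {p q : ℝ[X]} (hp : NNc p) (hq : NNc q) : NNc (p * q) := fun k => by
  rw [coeff_mul]; exact Finset.sum_nonneg fun x _ => mul_nonneg (hp _) (hq _)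
lemma NNc.one : NNc 1 := fun k => by rw [coeff_one]; split_ifs <;> norm_num
lemma NNc.zero : NNc 0 := fun k => by simp
lemma NNc.pow {p : ℝ[X]} (hp : NNc p) (n : ℕ) : NNc (p ^ n) := by
  induction n with
  | zero => simpa using NNc.one
  | succ n ih => rw [pow_succ]; exact ih.mul hp
lemma NNc.sum {ι : Type*} (s : Finset ι) (p : ι → ℝ[X]) (h : ∀ i ∈ s, NNc (p i)) :
    NNc (∑ i ∈ s, p i) := fun k => by
  rw [finsetSum_coeff]; exact Finset.sum_nonneg fun i hi => h i hi k
lemma NNc.C {c : ℝ} (hc : 0 ≤ c) : NNc (C c) := fun k => by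
  rw [coeff_C]; split_ifs <;> simp [hc]
lemma NNc.X : NNc X := fun k => by rw [coeff_X]; split_ifs <;> norm_num
lemma NNc.nat (n : ℕ) : NNc (n : ℝ[X]) := by
  have := NNc.C (c := (n : ℝ)) (Nat.cast_nonneg n)
  simpa using this

lemma pow_lb {a e : ℝ[X]} (ha : NNc a) (he : NNc e) (j : ℕ) :
    NNc ((a + e) ^ (j + 1) - ((j + 1 : ℕ) : ℝ[X]) * (e * a ^ j)) ∧ NNc ((a + e) ^ j - a ^ j) := by
  induction j with
  | zero => simpa [NNc.zero] using ha
  | succ j ih =>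
    obtain ⟨h1, h2⟩ := ih
    have h3 : NNc ((a + e) ^ (j + 1) - a ^ (j + 1)) := by
      have : (a + e) ^ (j + 1) - a ^ (j + 1) = (a + e) * ((a+e)^j - a^j) + e * a ^ j := by ring
      rw [this]
      exact ((ha.add he).mul h2).add (he.mul (ha.pow j))
    refine ⟨?_, h3⟩
    have : (a + e) ^ (j + 1 + 1) - ((j + 1 + 1 : ℕ) : ℝ[X]) * (e * a ^ (j + 1)) =
        a * ((a + e) ^ (j + 1) - ((j + 1 : ℕ) : ℝ[X]) * (e * a ^ j)) +
          e * ((a + e) ^ (j + 1) - a ^ (j + 1)) := by push_cast; ring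
    rw [this]
    exact (ha.mul h1).add (he.mul h3)

lemma pow_lb' {a b c : ℝ[X]} (ha : NNc a) (hb : NNc b) (hc : NNc c) (j k : ℕ) :
    ((j : ℝ) + 1) * (b * a ^ j).coeff k ≤ ((a + b + c) ^ (j + 1)).coeff k := by
  have h1 := (pow_lb ha (hb.add hc) j).1
  have h2 := h1.add ((NNc.nat (j+1)).mul (hc.mul (ha.pow j)))
  have : (a + (b + c)) ^ (j + 1) - ((j + 1 : ℕ) : ℝ[X]) * ((b + c) * a ^ j) +
      ((j + 1 : ℕ) : ℝ[X]) * (c * a ^ j) = (a + b + c) ^ (j + 1) - Polynomial.C ((j : ℝ) + 1) * (b * a ^ j) := by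
    simp only [map_add, map_natCast, map_one]
    push_cast; ring
  rw [this] at h2
  have := h2 k
  rw [coeff_sub, coeff_C_mul] at this
  linarith

/-- geometric block -/
noncomputable def Gp (n : ℕ) : ℝ[X] := ∑ k ∈ Finset.range n, X ^ k

lemma Gp_coeff (n k : ℕ) : (Gp n).coeff k = if k < n then 1 else 0 := by
  simp [Gp, coeff_X_pow]

lemma Gp_nn (n : ℕ) : NNc (Gp n) := fun k => by rw [Gp_coeff]; split_ifs <;> norm_num

lemma Gp_eval (n : ℕ) : (Gp n).eval 1 = n := by simp [Gp, eval_finsetSum]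

lemma Gp_deriv (n : ℕ) : (derivative (Gp n)).eval 1 ≤ (n : ℝ) ^ 2 / 2 := by
  have : (derivative (Gp n)).eval 1 = ((∑ k ∈ Finset.range n, k : ℕ) : ℝ) := by
    simp [Gp, eval_finsetSum, derivative_X_pow]
  rw [this]
  have h := Finset.sum_range_id_mul_two n
  have h2 : (∑ k ∈ Finset.range n, k) * 2 ≤ n * n := by
    rw [h]; exact Nat.mul_le_mul_left _ (Nat.sub_le _ _)
  have h3 : (((∑ k ∈ Finset.range n, k) * 2 : ℕ) : ℝ) ≤ ((n * n : ℕ) : ℝ) := by exact_mod_cast h2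
  push_cast at h3 ⊢
  nlinarith

lemma Gp_mul_coeff (n k : ℕ) (hk : k < n) (c : ℝ[X]) :
    (Gp n * c).coeff k = ∑ i ∈ Finset.range (k + 1), c.coeff i := by
  rw [mul_comm, coeff_mul, Finset.Nat.sum_antidiagonal_eq_sum_range_succ_mk]
  refine Finset.sum_congr rfl fun i hi => ?_
  simp only [Gp_coeff]
  rw [if_pos (by omega), mul_one]

lemma tail_bound {c : ℝ[X]} (hc : NNc c) (k : ℕ) :
    ((k : ℝ) + 1) * (c.eval 1 - ∑ i ∈ Finset.range (k + 1), c.coeff i) ≤ (derivative c).eval 1 := by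
  set M := c.natDegree + 1 + (k + 1) with hM
  have h1 : c.eval 1 = ∑ i ∈ Finset.range M, c.coeff i := by
    rw [eval_eq_sum_range' (n := M) (by omega)]; simp
  have h2 : (derivative c).eval 1 = ∑ i ∈ Finset.range M, c.coeff i * i := by
    rw [derivative_eval, Polynomial.sum_over_range' _ _ M (by omega)]
    · simp
    · simp
  have h3 : ∑ i ∈ Finset.range (k + 1), c.coeff i =
      ∑ i ∈ Finset.range M, if i < k + 1 then c.coeff i else 0 := by
    rw [← Finset.sum_filter]
    refine Finset.sum_congr ?_ fun _ _ => rfl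
    ext i; simp; omega
  rw [h1, h2, h3, ← Finset.sum_sub_distrib, Finset.mul_sum]
  refine Finset.sum_le_sum fun i _ => ?_
  have := hc i
  split_ifs with h
  · simp; positivity
  · have hi : (k : ℝ) + 1 ≤ i := by exact_mod_cast not_lt.1 h
    nlinarith

/-- block of scale r -/
noncomputable def blk (E r : ℕ) : ℝ[X] :=
  C ((1/2 : ℝ) ^ (r + 1) * (1/2 : ℝ) ^ ((E + 2) * r)) * Gp (2 ^ ((E + 2) * r))

/-- heavy-tailed law truncated -/
noncomputable def pol (E N : ℕ) : ℝ[X] := ∑ r ∈ Finset.range N, blk E r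

lemma blk_nn (E r : ℕ) : NNc (blk E r) := (NNc.C (by positivity)).mul (Gp_nn _)
lemma pol_nn (E N : ℕ) : NNc (pol E N) := NNc.sum _ _ fun r _ => blk_nn E r

lemma blk_eval (E r : ℕ) : (blk E r).eval 1 = (1/2 : ℝ) ^ (r + 1) := by
  rw [blk, eval_mul, eval_C, Gp_eval]
  push_cast
  rw [mul_assoc, ← mul_pow]; norm_num

lemma pol_eval (E N : ℕ) : (pol E N).eval 1 = 1 - (1/2 : ℝ) ^ N := by
  rw [pol, eval_finsetSum]
  simp only [blk_eval]
  induction N with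
  | zero => simp
  | succ n ih => rw [Finset.sum_range_succ, ih]; ring

lemma blk_deriv (E r : ℕ) : (derivative (blk E r)).eval 1 ≤ (1/4) * ((2 : ℝ) ^ (E + 1)) ^ r := by
  rw [blk, derivative_C_mul, eval_mul, eval_C]
  calc _ ≤ ((1/2 : ℝ) ^ (r + 1) * (1/2 : ℝ) ^ ((E + 2) * r)) * (((2 ^ ((E + 2) * r) : ℕ) : ℝ) ^ 2 / 2) :=
        mul_le_mul_of_nonneg_left (Gp_deriv _) (by positivity)
    _ = (1/4) * ((1/2 : ℝ) ^ r * 2 ^ r) * ((1/2 : ℝ) ^ ((E + 2) * r) * 2 ^ ((E + 2) * r)) *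
          ((2 : ℝ) ^ (E + 1)) ^ r := by
        push_cast
        rw [← pow_mul]
        have : (E + 2) * r = r + (E + 1) * r := by ring
        rw [this]
        ring
    _ = _ := by rw [← mul_pow, ← mul_pow]; norm_num

lemma pol_deriv (E r : ℕ) : (derivative (pol E (r + 1))).eval 1 ≤ (1/2) * ((2 : ℝ) ^ (E + 1)) ^ r := by
  rw [pol, derivative_sum, eval_finsetSum]
  refine (Finset.sum_le_sum fun i _ => blk_deriv E i).trans ?_
  rw [← Finset.mul_sum]
  have hx : (2 : ℝ) ≤ 2 ^ (E + 1) := by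
    rw [pow_succ]; nlinarith [one_le_pow₀ (one_le_two (α := ℝ)) (n := E)]
  have : ∑ i ∈ Finset.range (r + 1), ((2 : ℝ) ^ (E + 1)) ^ i ≤ 2 * ((2 : ℝ) ^ (E + 1)) ^ r := by
    generalize (2 : ℝ) ^ (E + 1) = x at hx
    induction r with
    | zero => simp
    | succ n ih =>
      rw [Finset.sum_range_succ]
      have : 0 ≤ x ^ n := by positivity
      rw [pow_succ] at *
      nlinarith
  linarith

lemma coeff_lb (E N r k j : ℕ) (hr : r < N) (hk : k < 2 ^ ((E + 2) * r))
    (hk' : ∀ r', r = r' + 1 → 2 ^ ((E + 2) * r') ≤ k) (hj : 4 * j ≤ 2 ^ r) :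
    ((j : ℝ) + 1) * (1/4) * (1/2 : ℝ) ^ ((E + 3) * r) ≤ ((pol E N) ^ (j + 1)).coeff k := by
  have hsplit : pol E N = pol E r + blk E r + ∑ i ∈ Finset.Ico (r + 1) N, blk E i := by
    rw [pol, pol, ← Finset.sum_range_succ, Finset.sum_range_add_sum_Ico _ (by omega)]
  have h1 := pow_lb' (pol_nn E r) (blk_nn E r) (NNc.sum (Finset.Ico (r + 1) N) (blk E) fun i _ => blk_nn E i) j k
  rw [← hsplit] at h1
  refine le_trans ?_ h1
  rw [mul_assoc]
  refine mul_le_mul_of_nonneg_left ?_ (by positivity)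
  rw [blk, mul_assoc, coeff_C_mul, Gp_mul_coeff _ _ hk]
  have hnn := (pol_nn E r).pow j
  have key : (1/2 : ℝ) ≤ ∑ i ∈ Finset.range (k + 1), (pol E r ^ j).coeff i := by
    rcases Nat.eq_zero_or_pos j with rfl | hjp
    · have : (pol E r ^ 0).coeff 0 ≤ ∑ i ∈ Finset.range (k + 1), (pol E r ^ 0).coeff i :=
        Finset.single_le_sum (f := fun i => (pol E r ^ 0).coeff i) (fun i _ => hnn i) (by simp)
      refine le_trans ?_ this
      simp; norm_num
    have hr0 : r ≠ 0 := by rintro rfl; simp at hj; omega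
    obtain ⟨r', rfl⟩ := Nat.exists_eq_succ_of_ne_zero hr0
    have hkk := hk' r' rfl
    have ht := tail_bound hnn k
    set a := pol E (r' + 1) with ha
    have ha1 : a.eval 1 = 1 - (1/2 : ℝ) ^ (r' + 1) := pol_eval _ _
    have hy0 : (0 : ℝ) < (1/2 : ℝ) ^ (r' + 1) := by positivity
    have hy1 : (1/2 : ℝ) ^ (r' + 1) ≤ 1 := pow_le_one₀ (by norm_num) (by norm_num)
    have hb : 1 - (j : ℝ) * (1/2 : ℝ) ^ (r' + 1) ≤ (a ^ j).eval 1 := by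
      rw [eval_pow, ha1]
      have := one_add_mul_le_pow (a := -(1/2 : ℝ) ^ (r' + 1)) (by linarith) j
      linarith [this, show (1 + -(1/2 : ℝ) ^ (r' + 1)) ^ j = (1 - (1/2 : ℝ) ^ (r' + 1)) ^ j by ring]
    have hd : (derivative (a ^ j)).eval 1 ≤ (j : ℝ) * ((1/2) * ((2 : ℝ) ^ (E + 1)) ^ r') := by
      rw [derivative_pow, eval_mul, eval_mul, eval_C, eval_pow, ha1]
      have h3 := pol_deriv E r'
      have h4 : (1 - (1/2 : ℝ) ^ (r' + 1)) ^ (j - 1) ≤ 1 := pow_le_one₀ (by linarith) (by linarith)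
      have h4' : 0 ≤ (1 - (1/2 : ℝ) ^ (r' + 1)) ^ (j - 1) := pow_nonneg (by linarith) _
      calc _ ≤ ((j : ℝ) * (1 - (1/2 : ℝ) ^ (r' + 1)) ^ (j - 1)) * ((1/2) * ((2 : ℝ) ^ (E + 1)) ^ r') :=
            mul_le_mul_of_nonneg_left h3 (by positivity)
        _ ≤ ((j : ℝ) * 1) * ((1/2) * ((2 : ℝ) ^ (E + 1)) ^ r') := by gcongr
        _ = _ := by ring
    have hK : ((2 : ℝ) ^ (E + 1)) ^ r' * 2 ^ r' ≤ (k : ℝ) + 1 := by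
      have : ((2 ^ ((E + 2) * r') : ℕ) : ℝ) ≤ k := by exact_mod_cast hkk
      push_cast at this
      have h5 : ((2 : ℝ) ^ (E + 1)) ^ r' * 2 ^ r' = 2 ^ ((E + 2) * r') := by
        rw [← pow_mul, ← pow_add]; congr 1; ring
      linarith
    have hjr : 4 * (j : ℝ) * (1/2 : ℝ) ^ (r' + 1) ≤ 1 := by
      have : ((4 * j : ℕ) : ℝ) ≤ ((2 ^ (r' + 1) : ℕ) : ℝ) := by exact_mod_cast hj
      push_cast at this
      have h6 : (2 : ℝ) ^ (r' + 1) * (1/2 : ℝ) ^ (r' + 1) = 1 := by rw [← mul_pow]; norm_num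
      nlinarith
    have h7 : (2 : ℝ) ^ r' * (1/2 : ℝ) ^ (r' + 1) = 1/2 := by
      rw [pow_succ, ← mul_assoc, ← mul_pow]; norm_num
    have h8 : (j : ℝ) * ((1/2) * ((2 : ℝ) ^ (E + 1)) ^ r') ≤ ((k : ℝ) + 1) * (j * (1/2 : ℝ) ^ (r' + 1)) := by
      calc (j : ℝ) * ((1/2) * ((2 : ℝ) ^ (E + 1)) ^ r')
          = (((2 : ℝ) ^ (E + 1)) ^ r' * 2 ^ r') * (j * (1/2 : ℝ) ^ (r' + 1)) := by
            rw [mul_assoc (((2 : ℝ) ^ (E + 1)) ^ r'), mul_left_comm ((2 : ℝ) ^ r'), h7]; ring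
        _ ≤ _ := mul_le_mul_of_nonneg_right hK (by positivity)
    have h9 : (a ^ j).eval 1 - ∑ i ∈ Finset.range (k + 1), (a ^ j).coeff i ≤ j * (1/2 : ℝ) ^ (r' + 1) :=
      le_of_mul_le_mul_left ((ht.trans hd).trans h8) (by positivity)
    linarith
  calc (1/4) * (1/2 : ℝ) ^ ((E + 3) * r)
      = ((1/2 : ℝ) ^ (r + 1) * (1/2 : ℝ) ^ ((E + 2) * r)) * (1/2) := by
        have : (E + 3) * r = r + (E + 2) * r := by ring
        rw [this]; ring
    _ ≤ _ := mul_le_mul_of_nonneg_left key (by positivity)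

end

section
open Polynomial

lemma exists_level (D L k : ℕ) (hk : k < 2 ^ (D * L)) :
    ∃ r ≤ L, k < 2 ^ (D * r) ∧ ∀ r', r = r' + 1 → 2 ^ (D * r') ≤ k := by
  classical
  have hex : ∃ r, k < 2 ^ (D * r) := ⟨L, hk⟩
  refine ⟨Nat.find hex, Nat.find_min' hex hk, Nat.find_spec hex, fun r' h => ?_⟩
  exact not_lt.1 (Nat.find_min hex (m := r') (by omega))

lemma exists_min_level {d : ℕ} (L : ℕ) (r : Fin d → ℕ) (hr : ∀ i, r i ≤ L) :
    ∃ m ≤ L, (∀ i, m ≤ r i) ∧ ∑ i, r i + L ≤ m + d * L := by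
  classical
  rcases Nat.eq_zero_or_pos d with rfl | hd
  · exact ⟨L, le_rfl, fun i => i.elim0, by simp⟩
  · have : Nonempty (Fin d) := ⟨⟨0, hd⟩⟩
    obtain ⟨i0, h0⟩ := Finite.exists_min r
    refine ⟨r i0, hr i0, h0, ?_⟩
    rw [← Finset.add_sum_erase _ _ (Finset.mem_univ i0)]
    have : ∑ i ∈ Finset.univ.erase i0, r i ≤ (d - 1) * L := by
      refine (Finset.sum_le_card_nsmul _ _ L fun i _ => hr i).trans ?_
      simp [Finset.card_erase_of_mem]
    obtain ⟨d', rfl⟩ := Nat.exists_eq_succ_of_ne_zero hd.ne'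
    simp only [Nat.succ_eq_add_one, Nat.add_sub_cancel] at *
    nlinarith

lemma sum_pow_lb (d M : ℕ) : (M : ℝ) ^ (d + 1) ≤ (d + 1) * ∑ j ∈ Finset.range M, ((j : ℝ) + 1) ^ d := by
  induction M with
  | zero => simp
  | succ n ih =>
    rw [Finset.sum_range_succ, mul_add]
    have h : ((n : ℝ) + 1) ^ (d + 1) - (n : ℝ) ^ (d + 1) ≤ (d + 1) * ((n : ℝ) + 1) ^ d := by
      have hx : (0 : ℝ) < (n : ℝ) + 1 := by positivity
      have hb := one_add_mul_le_pow (a := -(1 / ((n : ℝ) + 1))) (by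
        have : 1 / ((n : ℝ) + 1) ≤ 1 := by rw [div_le_one hx]; linarith [Nat.cast_nonneg (α := ℝ) n]
        linarith) (d + 1)
      have h2 : (1 + -(1 / ((n : ℝ) + 1))) = n / (n + 1) := by field_simp; ring
      rw [h2, div_pow, le_div_iff₀ (by positivity)] at hb
      have h3 : (1 + ((d + 1 : ℕ) : ℝ) * -(1 / ((n : ℝ) + 1))) * ((n : ℝ) + 1) ^ (d + 1) =
          ((n : ℝ) + 1) ^ (d + 1) - (d + 1) * ((n : ℝ) + 1) ^ d := by
        push_cast
        rw [pow_succ]; field_simp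
        ring
      rw [h3] at hb
      linarith
    push_cast
    linarith

/-- domination constant -/
noncomputable def cdom (d : ℕ) : ℝ := (1/4 : ℝ) ^ (2 * d + 1) / (d + 1)

lemma cdom_pos (d : ℕ) : 0 < cdom d := by unfold cdom; positivity

lemma comb_lb {d : ℕ} (L N : ℕ) (hN : L < N) (κ : Fin d → ℕ) (hκ : ∀ i, κ i < 2 ^ ((d + 2) * L)) :
    cdom d * 2 ^ L * ((1/2 : ℝ) ^ ((d + 2) * L)) ^ d ≤
      ∑ j ∈ Finset.range (2 ^ L), ∏ i, ((pol d N) ^ (j + 1)).coeff (κ i) := by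
  choose r hrL hr1 hr2 using fun i => exists_level (d + 2) L (κ i) (hκ i)
  obtain ⟨m, hmL, hm, hsum⟩ := exists_min_level L r hrL
  set M := 2 ^ m / 4 + 1 with hM
  have hML : M ≤ 2 ^ L := by
    have h1 : 2 ^ m ≤ 2 ^ L := Nat.pow_le_pow_right (by norm_num) hmL
    have h2 : 1 ≤ 2 ^ m := Nat.one_le_two_pow
    omega
  have hMr : (2 : ℝ) ^ m / 4 ≤ M := by
    have : 2 ^ m ≤ 4 * M := by omega
    have : ((2 ^ m : ℕ) : ℝ) ≤ ((4 * M : ℕ) : ℝ) := by exact_mod_cast this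
    push_cast at this; linarith
  have hnn : ∀ j, 0 ≤ ∏ i, ((pol d N) ^ (j + 1)).coeff (κ i) := fun j =>
    Finset.prod_nonneg fun i _ => (pol_nn d N).pow (j + 1) (κ i)
  have step1 : ∑ j ∈ Finset.range M, ((j : ℝ) + 1) ^ d * ((1/4 : ℝ) ^ d * (1/2 : ℝ) ^ ((d + 3) * ∑ i, r i))
      ≤ ∑ j ∈ Finset.range (2 ^ L), ∏ i, ((pol d N) ^ (j + 1)).coeff (κ i) := by
    refine le_trans (Finset.sum_le_sum fun j hj => ?_)
      (Finset.sum_le_sum_of_subset_of_nonneg (Finset.range_subset_range.2 hML) fun j _ _ => hnn j)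
    have hj4 : 4 * j ≤ 2 ^ m := by have := Finset.mem_range.1 hj; omega
    calc ((j : ℝ) + 1) ^ d * ((1/4 : ℝ) ^ d * (1/2 : ℝ) ^ ((d + 3) * ∑ i, r i))
        = ∏ i : Fin d, (((j : ℝ) + 1) * (1/4) * (1/2 : ℝ) ^ ((d + 3) * r i)) := by
          rw [Finset.prod_mul_distrib, Finset.prod_const, Finset.prod_pow_eq_pow_sum, Finset.mul_sum]
          simp [mul_pow]; ring
      _ ≤ _ := Finset.prod_le_prod (fun i _ => by positivity) fun i _ =>
          coeff_lb d N (r i) (κ i) j (by have := hrL i; omega) (hr1 i) (hr2 i)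
            (hj4.trans (Nat.pow_le_pow_right (by norm_num) (hm i)))
  refine le_trans ?_ step1
  rw [← Finset.sum_mul]
  have h1 := sum_pow_lb d M
  have h2 : ((2 : ℝ) ^ m / 4) ^ (d + 1) ≤ (M : ℝ) ^ (d + 1) := pow_le_pow_left₀ (by positivity) hMr _
  have h3 : ((2 : ℝ) ^ m / 4) ^ (d + 1) / (d + 1) ≤ ∑ j ∈ Finset.range M, ((j : ℝ) + 1) ^ d := by
    rw [div_le_iff₀ (by positivity)]; linarith
  refine le_trans ?_ (mul_le_mul_of_nonneg_right h3 (by positivity))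
  have hexp : (d + 3) * ∑ i, r i + L ≤ m * (d + 1) + (d + 2) * L * d := by nlinarith
  have h4 : (2 : ℝ) ^ L * ((1/2 : ℝ) ^ ((d + 2) * L)) ^ d ≤ 2 ^ (m * (d + 1)) * (1/2 : ℝ) ^ ((d + 3) * ∑ i, r i) := by
    rw [← pow_mul]
    simp only [one_div, inv_pow]
    rw [← div_eq_mul_inv, ← div_eq_mul_inv, div_le_div_iff₀ (by positivity) (by positivity), ← pow_add, ← pow_add]
    exact pow_le_pow_right₀ (by norm_num) (by omega)
  calc cdom d * 2 ^ L * ((1/2 : ℝ) ^ ((d + 2) * L)) ^ d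
      = cdom d * (2 ^ L * ((1/2 : ℝ) ^ ((d + 2) * L)) ^ d) := by ring
    _ ≤ cdom d * (2 ^ (m * (d + 1)) * (1/2 : ℝ) ^ ((d + 3) * ∑ i, r i)) :=
        mul_le_mul_of_nonneg_left h4 (cdom_pos d).le
    _ = _ := by
        have e : ((2 : ℝ) ^ m / 4) ^ (d + 1) = 2 ^ (m * (d + 1)) * (1/4 : ℝ) ^ (d + 1) := by
          rw [pow_mul, ← mul_pow]; congr 1; ring
        rw [e, cdom]
        have : 2 * d + 1 = (d + 1) + d := by ring
        rw [this, pow_add (1/4 : ℝ)]; ring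

end

section
/-- variables -/
noncomputable def Xi {d : ℕ} (i : Fin d) : AddMonoidAlgebra ℝ (Fin d → ℕ) :=
  AddMonoidAlgebra.single (Pi.single i 1) 1

lemma Xi_pow {d : ℕ} (i : Fin d) (n : ℕ) :
    Xi i ^ n = AddMonoidAlgebra.single (Pi.single i n) 1 := by
  rw [Xi, AddMonoidAlgebra.single_pow, one_pow, ← Pi.single_smul]; simp

lemma prod_Xi_pow {d : ℕ} (κ : Fin d → ℕ) :
    ∏ i, Xi i ^ κ i = AddMonoidAlgebra.single κ (1 : ℝ) := by
  classical
  simp only [Xi_pow]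
  have : ∀ s : Finset (Fin d), ∏ i ∈ s, (AddMonoidAlgebra.single (Pi.single i (κ i)) 1 :
      AddMonoidAlgebra ℝ (Fin d → ℕ)) = AddMonoidAlgebra.single (∑ i ∈ s, Pi.single i (κ i)) 1 := by
    intro s
    induction s using Finset.induction_on with
    | empty => simp [AddMonoidAlgebra.one_def]
    | insert a s ha ih =>
      rw [Finset.prod_insert ha, Finset.sum_insert ha, ih, AddMonoidAlgebra.single_mul_single, one_mul]
  rw [this, Finset.univ_sum_single]

lemma prod_sum_Xi {d : ℕ} (R : ℕ) (c : ℕ → ℝ) :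
    ∏ i : Fin d, ∑ k ∈ Finset.range R, c k • Xi i ^ k =
      ∑ κ ∈ Fintype.piFinset fun _ : Fin d => Finset.range R,
        (∏ i, c (κ i)) • AddMonoidAlgebra.single κ (1 : ℝ) := by
  rw [Finset.prod_univ_sum]
  refine Finset.sum_congr rfl fun κ _ => ?_
  rw [Finset.prod_smul, prod_Xi_pow]

section
variable {μ : Measure Ω} {d : ℕ}

/-- algebra action -/
noncomputable def Phi (τ : Multiplicative (Fin d → ℕ) →* Module.End ℝ (VL μ)) :
    AddMonoidAlgebra ℝ (Fin d → ℕ) →ₐ[ℝ] Module.End ℝ (VL μ) :=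
  AddMonoidAlgebra.lift ℝ _ _ τ

lemma Phi_single (τ : Multiplicative (Fin d → ℕ) →* Module.End ℝ (VL μ)) (κ : Fin d → ℕ) :
    Phi τ (AddMonoidAlgebra.single κ 1) = τ (Multiplicative.ofAdd κ) := by
  rw [Phi, AddMonoidAlgebra.lift_single, one_smul]

lemma Phi_prod_sum (τ : Multiplicative (Fin d → ℕ) →* Module.End ℝ (VL μ)) (R : ℕ) (c : ℕ → ℝ) :
    Phi τ (∏ i : Fin d, ∑ k ∈ Finset.range R, c k • Xi i ^ k) =
      ∑ κ ∈ Fintype.piFinset fun _ : Fin d => Finset.range R,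
        (∏ i, c (κ i)) • τ (Multiplicative.ofAdd κ) := by
  rw [prod_sum_Xi, map_sum]
  refine Finset.sum_congr rfl fun κ _ => ?_
  rw [map_smul, Phi_single]

/-- discrete cube averages -/
noncomputable def Dn (τ : Multiplicative (Fin d → ℕ) →* Module.End ℝ (VL μ)) (n : ℕ) :
    Module.End ℝ (VL μ) :=
  ∑ κ ∈ Fintype.piFinset fun _ : Fin d => Finset.range n,
    ((1 / (n : ℝ)) ^ d) • τ (Multiplicative.ofAdd κ)

lemma Dn_pds (τ : Multiplicative (Fin d → ℕ) →* Module.End ℝ (VL μ)) (hτ : ∀ κ, PDS (τ κ)) (n : ℕ) :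
    PDS (Dn τ n) := by
  refine PDS.sum _ _ _ (fun _ _ => by positivity) ?_ fun κ _ => hτ _
  simp only [Finset.sum_const, Fintype.card_piFinset, Finset.card_range, Finset.prod_const,
    Finset.card_univ, Fintype.card_fin, nsmul_eq_mul]
  push_cast
  rw [← mul_pow]
  rcases Nat.eq_zero_or_pos n with rfl | hn
  · simp only [Nat.cast_zero, zero_mul]; exact pow_le_one₀ le_rfl zero_le_one
  · rw [mul_one_div_cancel (by positivity), one_pow]

lemma Dn_mono (τ : Multiplicative (Fin d → ℕ) →* Module.End ℝ (VL μ)) (hτ : ∀ κ, PDS (τ κ))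
    {n m : ℕ} (hn : 0 < n) (h : n ≤ m) {q : VL μ} (hq : ∀ᵐ ω ∂μ, 0 ≤ fn q ω) :
    ∀ᵐ ω ∂μ, fn (Dn τ n q) ω ≤ ((m : ℝ) / n) ^ d * fn (Dn τ m q) ω := by
  have hp : ∀ᵐ ω ∂μ, ∀ κ ∈ Fintype.piFinset fun _ : Fin d => Finset.range m,
      0 ≤ fn (τ (Multiplicative.ofAdd κ) q) ω := by
    rw [Filter.eventually_all_finset]
    exact fun κ _ => (hτ _).pos q hq
  filter_upwards [hp, fn_sum_smul_apply (Fintype.piFinset fun _ : Fin d => Finset.range n)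
    (fun _ => (1 / (n : ℝ)) ^ d) (fun κ => τ (Multiplicative.ofAdd κ)) q,
    fn_sum_smul_apply (Fintype.piFinset fun _ : Fin d => Finset.range m)
    (fun _ => (1 / (m : ℝ)) ^ d) (fun κ => τ (Multiplicative.ofAdd κ)) q] with ω a b c
  rw [Dn, Dn, b, c, ← Finset.mul_sum, ← Finset.mul_sum, ← mul_assoc, ← mul_pow]
  have hm : (0 : ℝ) < m := by exact_mod_cast hn.trans_le h
  have : (m : ℝ) / n * (1 / m) = 1 / n := by field_simp
  rw [this]
  refine mul_le_mul_of_nonneg_left ?_ (by positivity)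
  refine Finset.sum_le_sum_of_subset_of_nonneg ?_ fun κ hκ _ => a κ hκ
  exact Fintype.piFinset_subset _ _ fun _ => Finset.range_subset_range.2 h

/-- Brunel operator -/
noncomputable def brunel (τ : Multiplicative (Fin d → ℕ) →* Module.End ℝ (VL μ)) (N : ℕ) :
    Module.End ℝ (VL μ) :=
  Phi τ (∏ i : Fin d, Polynomial.aeval (Xi i) (pol d N))

lemma brunel_pow (τ : Multiplicative (Fin d → ℕ) →* Module.End ℝ (VL μ)) (N j R : ℕ)
    (hR : ((pol d N) ^ j).natDegree < R) :
    brunel τ N ^ j = ∑ κ ∈ Fintype.piFinset fun _ : Fin d => Finset.range R,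
        (∏ i, ((pol d N) ^ j).coeff (κ i)) • τ (Multiplicative.ofAdd κ) := by
  rw [← Phi_prod_sum, brunel, ← map_pow, ← Finset.prod_pow]
  congr 1
  refine Finset.prod_congr rfl fun i _ => ?_
  rw [← map_pow, Polynomial.aeval_eq_sum_range' hR]

lemma brunel_pds (τ : Multiplicative (Fin d → ℕ) →* Module.End ℝ (VL μ)) (hτ : ∀ κ, PDS (τ κ))
    (N : ℕ) : PDS (brunel τ N) := by
  rw [← pow_one (brunel τ N), brunel_pow τ N 1 _ (Nat.lt_succ_self _)]
  refine PDS.sum _ _ _ (fun κ _ => Finset.prod_nonneg fun i _ => (pol_nn d N).pow 1 _) ?_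
    fun κ _ => hτ _
  rw [← Finset.prod_univ_sum (fun _ : Fin d => Finset.range _) fun _ k => ((pol d N) ^ 1).coeff k]
  refine Finset.prod_le_one (fun i _ => Finset.sum_nonneg fun k _ => (pol_nn d N).pow 1 _) fun i _ => ?_
  have := Polynomial.eval_eq_sum_range (p := (pol d N) ^ 1) (1 : ℝ)
  simp only [one_pow, mul_one] at this
  rw [Nat.succ_eq_add_one, ← this, pow_one, pol_eval]
  have : (0 : ℝ) ≤ (1/2) ^ N := by positivity
  linarith

lemma dom (τ : Multiplicative (Fin d → ℕ) →* Module.End ℝ (VL μ)) (hτ : ∀ κ, PDS (τ κ))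
    (N L : ℕ) (hL : L < N) {q : VL μ} (hq : ∀ᵐ ω ∂μ, 0 ≤ fn q ω) :
    ∀ᵐ ω ∂μ, cdom d * 2 ^ L * fn (Dn τ (2 ^ ((d + 2) * L)) q) ω ≤
      fn ((∑ j ∈ Finset.range (2 ^ L + 1), brunel τ N ^ j) q) ω := by
  obtain ⟨R, hR1, hR2⟩ : ∃ R, 2 ^ ((d + 2) * L) ≤ R ∧
      ∀ j ∈ Finset.range (2 ^ L), ((pol d N) ^ (j + 1)).natDegree < R := by
    refine ⟨2 ^ ((d + 2) * L) + ∑ j ∈ Finset.range (2 ^ L), (((pol d N) ^ (j + 1)).natDegree + 1), by omega, ?_⟩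
    intro j hj
    have := Finset.single_le_sum (f := fun j => ((pol d N) ^ (j + 1)).natDegree + 1)
      (fun _ _ => Nat.zero_le _) hj
    have h2 : 0 < 2 ^ ((d + 2) * L) := by positivity
    generalize 2 ^ ((d + 2) * L) = X at *
    omega
  set s := Fintype.piFinset fun _ : Fin d => Finset.range R with hs
  set s0 := Fintype.piFinset fun _ : Fin d => Finset.range (2 ^ ((d + 2) * L)) with hs0
  have hp : ∀ᵐ ω ∂μ, ∀ κ ∈ s, 0 ≤ fn (τ (Multiplicative.ofAdd κ) q) ω := by
    rw [Filter.eventually_all_finset]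
    exact fun κ _ => (hτ _).pos q hq
  have hb : (∑ j ∈ Finset.range (2 ^ L + 1), brunel τ N ^ j) =
      ∑ κ ∈ s, (∑ j ∈ Finset.range (2 ^ L), ∏ i, ((pol d N) ^ (j + 1)).coeff (κ i)) •
        τ (Multiplicative.ofAdd κ) + 1 := by
    rw [Finset.sum_range_succ', pow_zero]
    congr 1
    rw [Finset.sum_congr rfl fun j hj => brunel_pow τ N (j + 1) R (hR2 j hj), Finset.sum_comm]
    refine Finset.sum_congr rfl fun κ _ => ?_
    rw [Finset.sum_smul]
  rw [hb, LinearMap.add_apply, Module.End.one_apply]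
  filter_upwards [hp, hq, fn_add ((∑ κ ∈ s, (∑ j ∈ Finset.range (2 ^ L), ∏ i, ((pol d N) ^ (j + 1)).coeff (κ i)) •
        τ (Multiplicative.ofAdd κ)) q) q, fn_sum_smul_apply s _ (fun κ => τ (Multiplicative.ofAdd κ)) q,
     fn_sum_smul_apply s0
    (fun _ => (1 / ((2 ^ ((d + 2) * L) : ℕ) : ℝ)) ^ d) (fun κ => τ (Multiplicative.ofAdd κ)) q] with ω a b c e f
  rw [Dn, c, e, f]
  have hsub : s0 ⊆ s := Fintype.piFinset_subset _ _ fun _ => Finset.range_subset_range.2 hR1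
  have hnn : ∀ κ : Fin d → ℕ, 0 ≤ ∑ j ∈ Finset.range (2 ^ L), ∏ i, ((pol d N) ^ (j + 1)).coeff (κ i) :=
    fun κ => Finset.sum_nonneg fun j _ => Finset.prod_nonneg fun i _ => (pol_nn d N).pow (j + 1) _
  have h1 := Finset.sum_le_sum_of_subset_of_nonneg hsub (f := fun κ =>
    (∑ j ∈ Finset.range (2 ^ L), ∏ i, ((pol d N) ^ (j + 1)).coeff (κ i)) *
      fn (τ (Multiplicative.ofAdd κ) q) ω) fun κ hκ _ => mul_nonneg (hnn κ) (a κ hκ)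
  refine le_trans ?_ (le_add_of_le_of_nonneg h1 b)
  rw [Finset.mul_sum]
  refine Finset.sum_le_sum fun κ hκ => ?_
  rw [← mul_assoc]
  refine mul_le_mul_of_nonneg_right ?_ (a κ (hsub hκ))
  have := comb_lb L N hL κ (fun i => by
    have := Fintype.mem_piFinset.1 hκ i
    simpa using this)
  refine le_trans (le_of_eq ?_) this
  push_cast
  rw [← one_div_pow]

/-- maximal inequality along dyadic scales -/
lemma maximal_dyadic (τ : Multiplicative (Fin d → ℕ) →* Module.End ℝ (VL μ)) (hτ : ∀ κ, PDS (τ κ))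
    {q : VL μ} (hq : ∀ᵐ ω ∂μ, 0 ≤ fn q ω)
    (hqi : ∫⁻ ω, ENNReal.ofReal (fn q ω) ∂μ ≠ ∞) {lam : ℝ} (hl : 0 < lam) :
    ∃ S : Set Ω, MeasurableSet S ∧
      ENNReal.ofReal (cdom d / 2 * lam) * μ S ≤ ∫⁻ ω, ENNReal.ofReal (fn q ω) ∂μ ∧
      ∀ L : ℕ, ∀ ω, lam < fn (Dn τ (2 ^ ((d + 2) * L)) q) ω → ω ∈ S := by
  set B : ℕ → Set Ω := fun L => {ω | lam < fn (Dn τ (2 ^ ((d + 2) * L)) q) ω} with hB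
  have hBm : ∀ L, MeasurableSet (B L) := fun L => measurableSet_lt measurable_const (fn_meas _)
  have hc := cdom_pos d
  have hfin : ∀ N, ENNReal.ofReal (cdom d / 2 * lam) * μ (Set.accumulate B N) ≤
      ∫⁻ ω, ENNReal.ofReal (fn q ω) ∂μ := by
    intro N
    obtain ⟨S, hSm, hS1, hS2⟩ := hopf (brunel_pds τ hτ (N + 1)) hq hqi
      (lam := cdom d / 2 * lam) (by positivity) (2 ^ N + 1)
    refine le_trans (mul_le_mul' le_rfl (measure_mono_ae ?_)) hS1
    have h1 : ∀ᵐ ω ∂μ, ∀ L ∈ Finset.range (N + 1), lam < fn (Dn τ (2 ^ ((d + 2) * L)) q) ω → ω ∈ S := by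
      rw [Filter.eventually_all_finset]
      intro L hL
      have hL' : L < N + 1 := Finset.mem_range.1 hL
      filter_upwards [dom τ hτ (N + 1) L hL' hq, hS2 (2 ^ L + 1) (by
        have : 2 ^ L ≤ 2 ^ N := Nat.pow_le_pow_right (by norm_num) (by omega)
        omega)] with ω a b h
      apply b
      refine lt_of_lt_of_le ?_ a
      have h2 : (1 : ℝ) ≤ 2 ^ L := one_le_pow₀ (by norm_num)
      push_cast
      have h3 : cdom d * 2 ^ L * lam < cdom d * 2 ^ L * fn (Dn τ (2 ^ ((d + 2) * L)) q) ω :=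
        mul_lt_mul_of_pos_left h (by positivity)
      have h4 : 0 < cdom d * lam := by positivity
      nlinarith
    filter_upwards [h1] with ω h hω
    obtain ⟨L, hL, hL'⟩ := Set.mem_accumulate.1 hω
    exact h L (Finset.mem_range.2 (by omega)) hL'
  refine ⟨⋃ L, B L, MeasurableSet.iUnion hBm, ?_, fun L ω h => mem_iUnion.2 ⟨L, h⟩⟩
  rw [← Set.iUnion_accumulate, (Set.monotone_accumulate).measure_iUnion, ENNReal.mul_iSup]
  exact iSup_le hfin

/-- maximal constant -/
noncomputable def cmax (d : ℕ) : ℝ := cdom d / 2 / 2 ^ ((d + 2) * d)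

lemma cmax_pos (d : ℕ) : 0 < cmax d := by have := cdom_pos d; unfold cmax; positivity

lemma maximal (τ : Multiplicative (Fin d → ℕ) →* Module.End ℝ (VL μ)) (hτ : ∀ κ, PDS (τ κ))
    {q : VL μ} (hq : ∀ᵐ ω ∂μ, 0 ≤ fn q ω)
    (hqi : ∫⁻ ω, ENNReal.ofReal (fn q ω) ∂μ ≠ ∞) {lam : ℝ} (hl : 0 < lam) :
    ∃ S : Set Ω, MeasurableSet S ∧
      ENNReal.ofReal (cmax d * lam) * μ S ≤ ∫⁻ ω, ENNReal.ofReal (fn q ω) ∂μ ∧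
      ∀ n : ℕ, 0 < n → ∀ᵐ ω ∂μ, ω ∉ S → fn (Dn τ n q) ω ≤ lam := by
  obtain ⟨S, hSm, hS1, hS2⟩ := maximal_dyadic τ hτ hq hqi (lam := lam / 2 ^ ((d + 2) * d)) (by positivity)
  refine ⟨S, hSm, ?_, fun n hn => ?_⟩
  · convert hS1 using 3
    rw [cmax]; ring
  · have hex : ∃ L, n ≤ 2 ^ ((d + 2) * L) := ⟨n, (Nat.lt_two_pow_self).le.trans
      (Nat.pow_le_pow_right (by norm_num) (by nlinarith))⟩
    classical
    set L := Nat.find hex with hLd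
    have h1 : n ≤ 2 ^ ((d + 2) * L) := Nat.find_spec hex
    have h2 : 2 ^ ((d + 2) * L) ≤ 2 ^ (d + 2) * n := by
      rcases Nat.eq_zero_or_pos L with h0 | h0
      · rw [h0]; simp; exact Nat.mul_pos (by positivity) hn
      · have := not_le.1 (Nat.find_min hex (m := L - 1) (by omega))
        obtain ⟨l, hl⟩ := Nat.exists_eq_succ_of_ne_zero h0.ne'
        rw [hl] at this ⊢
        rw [Nat.succ_sub_one] at this
        rw [Nat.succ_eq_add_one, mul_add, pow_add, mul_one, mul_comm]
        exact Nat.mul_le_mul_left _ this.le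
    have hq' := (Dn_pds τ hτ (2 ^ ((d + 2) * L))).pos q hq
    filter_upwards [Dn_mono τ hτ hn h1 hq, hq'] with ω a b hω
    have h3 : fn (Dn τ (2 ^ ((d + 2) * L)) q) ω ≤ lam / 2 ^ ((d + 2) * d) := by
      by_contra h; exact hω (hS2 L ω (not_le.1 h))
    have h4 : ((2 ^ ((d + 2) * L) : ℕ) : ℝ) / n ≤ 2 ^ (d + 2) := by
      rw [div_le_iff₀ (by exact_mod_cast hn)]; exact_mod_cast h2
    calc _ ≤ _ := a
      _ ≤ ((2 : ℝ) ^ (d + 2)) ^ d * (lam / 2 ^ ((d + 2) * d)) := by gcongr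
      _ = lam := by rw [← pow_mul]; field_simp
end

end

section
section
variable {μ : Measure Ω} {ι : Type*} [SemilatticeSup ι]

/-- almost uniformly Cauchy -/
def AuC (μ : Measure Ω) (F : ι → Ω → ℝ) : Prop :=
  ∀ ε : ℝ, 0 < ε → ∃ S : Set Ω, MeasurableSet S ∧ μ S ≤ ENNReal.ofReal ε ∧
    ∃ t0 : ι, ∀ s ≥ t0, ∀ t ≥ t0, ∀ᵐ ω ∂μ, ω ∉ S → |F s ω - F t ω| ≤ ε

lemma AuC.approx {F : ι → Ω → ℝ}
    (h : ∀ ε : ℝ, 0 < ε → ∃ G : ι → Ω → ℝ, AuC μ G ∧ ∃ S : Set Ω, MeasurableSet S ∧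
      μ S ≤ ENNReal.ofReal ε ∧ ∃ t0 : ι, ∀ t ≥ t0, ∀ᵐ ω ∂μ, ω ∉ S → |F t ω - G t ω| ≤ ε) :
    AuC μ F := by
  intro ε hε
  obtain ⟨G, hG, S, hS, hSm, t0, ht⟩ := h (ε / 3) (by positivity)
  obtain ⟨S', hS', hSm', t1, ht'⟩ := hG (ε / 3) (by positivity)
  refine ⟨S ∪ S', hS.union hS', ?_, t0 ⊔ t1, fun s hs t htt => ?_⟩
  · refine (measure_union_le _ _).trans ((add_le_add hSm hSm').trans ?_)
    rw [← ENNReal.ofReal_add (by positivity) (by positivity)]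
    exact ENNReal.ofReal_le_ofReal (by linarith)
  · filter_upwards [ht s (le_sup_left.trans hs), ht t (le_sup_left.trans htt),
      ht' s (le_sup_right.trans hs) t (le_sup_right.trans htt)] with ω a b c hω
    simp only [mem_union, not_or] at hω
    have a := abs_le.1 (a hω.1)
    have b := abs_le.1 (b hω.1)
    have c := abs_le.1 (c hω.2)
    rw [abs_le]; constructor <;> linarith

lemma AuC.add {F G H : ι → Ω → ℝ} (hF : AuC μ F) (hG : AuC μ G)
    (h : ∀ t, H t =ᵐ[μ] fun ω => F t ω + G t ω) : AuC μ H := by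
  intro ε hε
  obtain ⟨S, hS, hSm, t0, ht⟩ := hF (ε / 2) (by positivity)
  obtain ⟨S', hS', hSm', t1, ht'⟩ := hG (ε / 2) (by positivity)
  refine ⟨S ∪ S', hS.union hS', ?_, t0 ⊔ t1, fun s hs t htt => ?_⟩
  · refine (measure_union_le _ _).trans ((add_le_add hSm hSm').trans ?_)
    rw [← ENNReal.ofReal_add (by positivity) (by positivity)]
    exact ENNReal.ofReal_le_ofReal (by linarith)
  · filter_upwards [ht s (le_sup_left.trans hs) t (le_sup_left.trans htt),
      ht' s (le_sup_right.trans hs) t (le_sup_right.trans htt), h s, h t] with ω a b c e hω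
    simp only [mem_union, not_or] at hω
    have a := abs_le.1 (a hω.1)
    have b := abs_le.1 (b hω.2)
    rw [c, e, abs_le]; constructor <;> linarith

lemma AuC.smul {F H : ι → Ω → ℝ} (hF : AuC μ F) (c : ℝ)
    (h : ∀ t, H t =ᵐ[μ] fun ω => c * F t ω) : AuC μ H := by
  intro ε hε
  obtain ⟨S, hS, hSm, t0, ht⟩ := hF (ε / (|c| + 1)) (by positivity)
  have hle : ε / (|c| + 1) ≤ ε := div_le_self hε.le (by linarith [abs_nonneg c])
  refine ⟨S, hS, hSm.trans (ENNReal.ofReal_le_ofReal hle), t0, fun s hs t htt => ?_⟩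
  filter_upwards [ht s hs t htt, h s, h t] with ω a e f hω
  rw [e, f, ← mul_sub, abs_mul]
  have := a hω
  calc |c| * |F s ω - F t ω| ≤ (|c| + 1) * (ε / (|c| + 1)) := by gcongr; linarith
    _ = ε := by field_simp

lemma AuC.of_const {H : ι → Ω → ℝ} (φ : Ω → ℝ) (t0 : ι) (h : ∀ t ≥ t0, H t =ᵐ[μ] φ) : AuC μ H := by
  intro ε hε
  refine ⟨∅, .empty, by simp, t0, fun s hs t ht => ?_⟩
  filter_upwards [h s hs, h t ht] with ω a b _
  rw [a, b]; simp [hε.le]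

lemma AuC.of_small {H : ι → Ω → ℝ} (h : ∀ ε : ℝ, 0 < ε → ∃ t0, ∀ t ≥ t0, ∀ᵐ ω ∂μ, |H t ω| ≤ ε) :
    AuC μ H := by
  intro ε hε
  obtain ⟨t0, ht⟩ := h (ε / 2) (by positivity)
  refine ⟨∅, .empty, by simp, t0, fun s hs t htt => ?_⟩
  filter_upwards [ht s hs, ht t htt] with ω a b _
  have a := abs_le.1 a
  have b := abs_le.1 b
  rw [abs_le]; constructor <;> linarith

lemma AuC.complete {F : ℝ → Ω → ℝ} (hm : ∀ t, Measurable (F t)) (hF : AuC μ F) :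
    ∃ φ : Ω → ℝ, Measurable φ ∧ (∀ᵐ ω ∂μ, Tendsto (fun n : ℕ => F n ω) atTop (𝓝 (φ ω))) ∧
      ∀ ε : ℝ, 0 < ε → ∃ S : Set Ω, MeasurableSet S ∧ μ S ≤ ENNReal.ofReal ε ∧
        ∀ δ : ℝ, 0 < δ → ∃ t0 : ℝ, ∀ t ≥ t0, ∀ᵐ ω ∂μ, ω ∉ S → |F t ω - φ ω| ≤ δ := by
  choose S hS hSm t0 ht using fun k : ℕ => hF ((1 / 2) ^ k) (by positivity)
  set N : ℕ → Set Ω := fun m => ⋃ k, S (m + k) with hN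
  have hNm : ∀ m, MeasurableSet (N m) := fun m => .iUnion fun k => hS _
  have hNμ : ∀ m, μ (N m) ≤ ENNReal.ofReal (2 * (1 / 2) ^ m) := by
    intro m
    refine (measure_iUnion_le _).trans ((ENNReal.tsum_le_tsum fun k => hSm (m + k)).trans ?_)
    have h1 : ∀ k : ℕ, ((1 : ℝ) / 2) ^ (m + k) = (1 / 2) ^ m * (1 / 2) ^ k := fun k => pow_add _ _ _
    simp_rw [h1]
    rw [← ENNReal.ofReal_tsum_of_nonneg (fun k => by positivity)
      (summable_geometric_two.mul_left _), tsum_mul_left, tsum_geometric_two, mul_comm]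
  have htend : Tendsto (fun m : ℕ => (2 : ℝ) * (1 / 2) ^ m) atTop (𝓝 0) := by
    simpa using (tendsto_pow_atTop_nhds_zero_of_lt_one (r := (1 / 2 : ℝ)) (by norm_num)
      (by norm_num)).const_mul 2
  have hnull : ∀ᵐ ω ∂μ, ∃ m, ω ∉ N m := by
    have : μ (⋂ m, N m) = 0 := by
      have h2 : Tendsto (fun m : ℕ => ENNReal.ofReal ((2 : ℝ) * (1 / 2) ^ m)) atTop (𝓝 0) := by
        simpa using ENNReal.tendsto_ofReal htend
      refine le_antisymm (ge_of_tendsto' h2 fun m => (measure_mono (iInter_subset _ m)).trans (hNμ m)) bot_le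
    rw [ae_iff]
    convert this using 2
    ext ω; simp
  have hnat : ∀ᵐ ω ∂μ, ∀ k : ℕ, ∀ i j : ℕ, t0 k ≤ i → t0 k ≤ j → ω ∉ S k →
      |F i ω - F j ω| ≤ (1 / 2) ^ k := by
    simp only [ae_all_iff]
    exact fun k i j hi hj => ht k i hi j hj
  have hex : ∀ᵐ ω ∂μ, ∃ l, Tendsto (fun n : ℕ => F n ω) atTop (𝓝 l) := by
    filter_upwards [hnull, hnat] with ω ⟨m, hω⟩ h
    refine cauchySeq_tendsto_of_complete (Metric.cauchySeq_iff.2 fun ε hε => ?_)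
    obtain ⟨k, hk⟩ := exists_pow_lt_of_lt_one hε (show (1 / 2 : ℝ) < 1 by norm_num)
    refine ⟨⌈t0 (m + k)⌉₊, fun i hi j hj => ?_⟩
    rw [Real.dist_eq]
    refine (h (m + k) i j ((Nat.le_ceil _).trans (by exact_mod_cast hi))
      ((Nat.le_ceil _).trans (by exact_mod_cast hj)) (fun hh => hω (mem_iUnion.2 ⟨k, hh⟩))).trans_lt ?_
    refine lt_of_le_of_lt (pow_le_pow_of_le_one (by norm_num) (by norm_num) (by omega)) hk
  obtain ⟨φ, hφ, hlim⟩ := measurable_limit_of_tendsto_metrizable_ae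
    (fun n : ℕ => (hm n).aemeasurable) hex
  refine ⟨φ, hφ, hlim, fun ε hε => ?_⟩
  obtain ⟨m, hmε⟩ := ((htend.eventually (gt_mem_nhds hε))).exists
  refine ⟨N m, hNm m, (hNμ m).trans (ENNReal.ofReal_le_ofReal hmε.le), fun δ hδ => ?_⟩
  obtain ⟨k, hk⟩ := exists_pow_lt_of_lt_one hδ (show (1 / 2 : ℝ) < 1 by norm_num)
  refine ⟨t0 (m + k), fun t htt => ?_⟩
  have : ∀ᵐ ω ∂μ, ∀ j : ℕ, t0 (m + k) ≤ j → ω ∉ S (m + k) → |F t ω - F j ω| ≤ (1 / 2) ^ (m + k) := by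
    simp only [ae_all_iff]
    exact fun j hj => ht _ t htt j hj
  filter_upwards [this, hlim] with ω a b hω
  have hc : Tendsto (fun n : ℕ => |F t ω - F n ω|) atTop (𝓝 |F t ω - φ ω|) :=
    (tendsto_const_nhds.sub b).abs
  refine le_of_tendsto hc ?_
  filter_upwards [eventually_ge_atTop ⌈t0 (m + k)⌉₊] with n hn
  refine (a n ((Nat.le_ceil _).trans (by exact_mod_cast hn)) fun hh => hω (mem_iUnion.2 ⟨k, hh⟩)).trans ?_
  exact (pow_le_pow_of_le_one (by norm_num) (by norm_num) (by omega)).trans hk.le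

end

end

section
section
variable {μ : Measure Ω} {d : ℕ}

lemma sq_eLp {h : Ω → ℝ} : eLpNorm h 2 μ ^ 2 = ∫⁻ ω, ENNReal.ofReal (h ω ^ 2) ∂μ := by
  have := eLpNorm_nnreal_pow_eq_lintegral (f := h) (μ := μ) (p := 2) (by norm_num)
  simp only [NNReal.coe_ofNat, ENNReal.coe_ofNat, ENNReal.rpow_ofNat] at this
  rw [this]
  refine lintegral_congr fun ω => ?_
  rw [Real.enorm_eq_ofReal_abs, ← ENNReal.ofReal_pow (abs_nonneg _), sq_abs]

lemma memL2_iff {h : Ω → ℝ} (hm : AEStronglyMeasurable h μ) :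
    MemLp h 2 μ ↔ ∫⁻ ω, ENNReal.ofReal (h ω ^ 2) ∂μ < ∞ := by
  rw [← sq_eLp]
  constructor
  · intro h1
    exact ENNReal.pow_lt_top h1.2
  · intro h1
    refine ⟨hm, ?_⟩
    by_contra hc
    rw [not_lt, top_le_iff] at hc
    rw [hc] at h1
    simp at h1

lemma L2_mem (x : Lp ℝ 2 μ) : (x : Ω →ₘ[μ] ℝ) ∈ VL μ := by
  obtain ⟨f, hf⟩ := exists_fn_of_L2 (Lp.memLp x)
  have : (x : Ω →ₘ[μ] ℝ) = f := AEEqFun.ext hf.symm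
  rw [this]; exact f.2

/-- inclusion of L² -/
noncomputable def J2 (μ : Measure Ω) : Lp ℝ 2 μ →ₗ[ℝ] VL μ where
  toFun x := ⟨x, L2_mem x⟩
  map_add' _ _ := rfl
  map_smul' _ _ := rfl

lemma J2_fn (x : Lp ℝ 2 μ) : fn (J2 μ x) = ⇑x := rfl

lemma exists_sq {q : VL μ} (hq : MemLp (fn q) 2 μ) : ∃ g : VL μ, fn g =ᵐ[μ] fun ω => fn q ω ^ 2 :=
  exists_fn_of_int hq.integrable_sq

lemma PDS.L2 {U : Module.End ℝ (VL μ)} (hU : PDS U) {q : VL μ} (hq : MemLp (fn q) 2 μ) :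
    MemLp (fn (U q)) 2 μ ∧ eLpNorm (fn (U q)) 2 μ ≤ eLpNorm (fn q) 2 μ := by
  obtain ⟨g, hg⟩ := exists_sq hq
  have h1 := hU.sq_le (f := q) (g := g) (by filter_upwards [hg] with ω a; rw [a])
  have h2 := hU.one g (by filter_upwards [hg] with ω a; rw [a]; positivity)
  have h3 : ∫⁻ ω, ENNReal.ofReal (fn (U q) ω ^ 2) ∂μ ≤ ∫⁻ ω, ENNReal.ofReal (fn q ω ^ 2) ∂μ := by
    calc _ ≤ ∫⁻ ω, ENNReal.ofReal (fn (U g) ω) ∂μ :=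
          lintegral_mono_ae (by filter_upwards [h1] with ω a using ENNReal.ofReal_le_ofReal a)
      _ ≤ _ := h2
      _ = _ := lintegral_congr_ae (by filter_upwards [hg] with ω a; rw [a])
  refine ⟨(memL2_iff (fn_aesm _)).2 (h3.trans_lt ((memL2_iff (fn_aesm _)).1 hq)), ?_⟩
  rw [← sq_eLp, ← sq_eLp] at h3
  exact (ENNReal.pow_le_pow_left_iff (by norm_num)).1 h3

/-- restriction of a PDS operator to L² -/
noncomputable def U2 {U : Module.End ℝ (VL μ)} (hU : PDS U) : Lp ℝ 2 μ →ₗ[ℝ] Lp ℝ 2 μ where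
  toFun x := ⟨(U (J2 μ x) : Ω →ₘ[μ] ℝ), Lp.mem_Lp_iff_memLp.2 (hU.L2 (q := J2 μ x) (Lp.memLp x)).1⟩
  map_add' x y := by
    apply Subtype.ext
    simp only [map_add]; rfl
  map_smul' c x := by
    apply Subtype.ext
    simp only [map_smul]; rfl

lemma J2_U2 {U : Module.End ℝ (VL μ)} (hU : PDS U) (x : Lp ℝ 2 μ) : J2 μ (U2 hU x) = U (J2 μ x) := rfl

lemma U2_norm {U : Module.End ℝ (VL μ)} (hU : PDS U) (x : Lp ℝ 2 μ) : ‖U2 hU x‖ ≤ ‖x‖ := by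
  rw [Lp.norm_def, Lp.norm_def]
  exact ENNReal.toReal_mono (Lp.eLpNorm_ne_top x) (hU.L2 (q := J2 μ x) (Lp.memLp x)).2

lemma weak22 (τ : Multiplicative (Fin d → ℕ) →* Module.End ℝ (VL μ)) (hτ : ∀ κ, PDS (τ κ))
    (q : Lp ℝ 2 μ) {lam : ℝ} (hl : 0 < lam) :
    ∃ S : Set Ω, MeasurableSet S ∧
      ENNReal.ofReal (cmax d * lam ^ 2) * μ S ≤ ENNReal.ofReal (‖q‖ ^ 2) ∧
      ∀ n : ℕ, 0 < n → ∀ᵐ ω ∂μ, ω ∉ S → |fn (Dn τ n (J2 μ q)) ω| ≤ lam := by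
  obtain ⟨g, hg⟩ := exists_sq (q := J2 μ q) (Lp.memLp q)
  have hi : ∫⁻ ω, ENNReal.ofReal (fn g ω) ∂μ = ENNReal.ofReal (‖q‖ ^ 2) := by
    rw [ENNReal.ofReal_pow (norm_nonneg _), Lp.norm_def, ENNReal.ofReal_toReal (Lp.eLpNorm_ne_top q),
      sq_eLp]
    exact lintegral_congr_ae (by filter_upwards [hg] with ω a; rw [a, J2_fn])
  obtain ⟨S, hS, h1, h2⟩ := maximal τ hτ (q := g) (by filter_upwards [hg] with ω a; rw [a]; positivity)
    (by rw [hi]; exact ENNReal.ofReal_ne_top) (lam := lam ^ 2) (by positivity)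
  refine ⟨S, hS, hi ▸ h1, fun n hn => ?_⟩
  filter_upwards [h2 n hn, (Dn_pds τ hτ n).sq_le (f := J2 μ q) (g := g)
    (by filter_upwards [hg] with ω a; rw [a])] with ω a b hω
  exact abs_le_of_sq_le_sq (b.trans (a hω)) hl.le

/-- good set -/
noncomputable def W2 (τ : Multiplicative (Fin d → ℕ) →* Module.End ℝ (VL μ)) :
    Submodule ℝ (Lp ℝ 2 μ) where
  carrier := {q | AuC μ fun n : ℕ => fn (Dn τ n (J2 μ q))}
  add_mem' {x y} hx hy := AuC.add hx hy fun n => by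
    rw [map_add, map_add]; exact fn_add _ _
  zero_mem' := AuC.of_const (fun _ => 0) 0 fun n _ => by
    rw [map_zero, map_zero]; exact fn_zero
  smul_mem' c x hx := AuC.smul hx c fun n => by
    rw [map_smul, map_smul]; exact fn_smul _ _

lemma W2_closed (τ : Multiplicative (Fin d → ℕ) →* Module.End ℝ (VL μ)) (hτ : ∀ κ, PDS (τ κ)) :
    IsClosed (W2 τ : Set (Lp ℝ 2 μ)) := by
  refine isClosed_of_closure_subset fun q hq => ?_
  refine AuC.approx fun ε hε => ?_
  have hc := cmax_pos d
  obtain ⟨q', hq', hd⟩ := Metric.mem_closure_iff.1 hq (Real.sqrt (cmax d * ε ^ 2 * ε)) (by positivity)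
  refine ⟨_, hq', ?_⟩
  obtain ⟨S, hS, h1, h2⟩ := weak22 τ hτ (q - q') hε
  refine ⟨S, hS, ?_, 1, fun n hn => ?_⟩
  · rw [dist_eq_norm] at hd
    have h3 : ‖q - q'‖ ^ 2 ≤ cmax d * ε ^ 2 * ε := by
      rw [← Real.sq_sqrt (show 0 ≤ cmax d * ε ^ 2 * ε by positivity)]
      gcongr
    have h4 := h1.trans (ENNReal.ofReal_le_ofReal h3)
    rw [ENNReal.ofReal_mul (p := cmax d * ε ^ 2) (by positivity)] at h4
    exact (ENNReal.mul_le_mul_iff_right (by simp; positivity) ENNReal.ofReal_ne_top).1 h4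
  · filter_upwards [h2 n hn, fn_sub (Dn τ n (J2 μ q)) (Dn τ n (J2 μ q'))] with ω a b hω
    have := a hω
    rwa [map_sub, map_sub, b] at this

lemma Phi_Xi_pow (τ : Multiplicative (Fin d → ℕ) →* Module.End ℝ (VL μ)) (i : Fin d) (k : ℕ) :
    Phi τ (Xi i ^ k) = τ (Multiplicative.ofAdd (Pi.single i k)) := by
  rw [Xi_pow, Phi_single]

lemma Phi_Xi (τ : Multiplicative (Fin d → ℕ) →* Module.End ℝ (VL μ)) (i : Fin d) :
    Phi τ (Xi i) = τ (Multiplicative.ofAdd (Pi.single i 1)) := by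
  rw [← Phi_Xi_pow, pow_one]

lemma cobdry (τ : Multiplicative (Fin d → ℕ) →* Module.End ℝ (VL μ)) (hτ : ∀ κ, PDS (τ κ))
    (i : Fin d) {g : VL μ} {c : ℝ} (hc : 0 ≤ c) (hg : ∀ᵐ ω ∂μ, |fn g ω| ≤ c) {n : ℕ} (hn : 0 < n) :
    ∀ᵐ ω ∂μ, |fn (Dn τ n (g - τ (Multiplicative.ofAdd (Pi.single i 1)) g)) ω| ≤ 2 * c / n := by
  set b : Fin d → AddMonoidAlgebra ℝ (Fin d → ℕ) := fun i =>
    ∑ k ∈ Finset.range n, (1 / (n : ℝ)) • Xi i ^ k with hb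
  have hn' : (0 : ℝ) < n := by exact_mod_cast hn
  have hbp : ∀ j, PDS (Phi τ (b j)) := by
    intro j
    simp only [hb, map_sum, map_smul, Phi_Xi_pow]
    refine PDS.sum _ _ _ (fun _ _ => by positivity) ?_ fun k _ => hτ _
    simp [hn'.ne']
  have hsp : ∀ s : Finset (Fin d), PDS (Phi τ (∏ j ∈ s, b j)) := by
    intro s
    induction s using Finset.induction_on with
    | empty => simpa using PDS.id
    | insert a s ha ih => rw [Finset.prod_insert ha, map_mul]; exact (hbp a).mul ih
  have hD : Dn τ n = Phi τ (∏ j, b j) := by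
    rw [hb, Phi_prod_sum τ n (fun _ => 1 / (n : ℝ)), Dn]
    simp
  have hb1 : b i * (1 - Xi i) = (1 / (n : ℝ)) • (1 - Xi i ^ n) := by
    simp only [hb]
    rw [← Finset.smul_sum, smul_mul_assoc, geom_sum_mul_neg]
  have key : Dn τ n (g - τ (Multiplicative.ofAdd (Pi.single i 1)) g) =
      Phi τ (∏ j ∈ Finset.univ.erase i, b j)
        ((1 / (n : ℝ)) • (g - τ (Multiplicative.ofAdd (Pi.single i n)) g)) := by
    have h1 : g - τ (Multiplicative.ofAdd (Pi.single i 1)) g = Phi τ (1 - Xi i) g := by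
      rw [map_sub, map_one, Phi_Xi]; rfl
    have h2 : (1 / (n : ℝ)) • (g - τ (Multiplicative.ofAdd (Pi.single i n)) g) =
        Phi τ ((1 / (n : ℝ)) • (1 - Xi i ^ n)) g := by
      rw [map_smul, map_sub, map_one, Phi_Xi_pow]; rfl
    rw [h1, h2, hD, ← hb1, ← Module.End.mul_apply, ← Module.End.mul_apply, ← map_mul, ← map_mul,
      ← Finset.prod_erase_mul _ _ (Finset.mem_univ i), mul_assoc]
  rw [key]
  refine (hsp _).abs_sub (by positivity) ?_
  filter_upwards [hg, (hτ (Multiplicative.ofAdd (Pi.single i n))).abs_sub hc hg,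
    fn_smul (1 / (n : ℝ)) (g - τ (Multiplicative.ofAdd (Pi.single i n)) g),
    fn_sub g (τ (Multiplicative.ofAdd (Pi.single i n)) g)] with ω a1 a2 a3 a4
  rw [a3, a4, abs_mul, abs_of_pos (by positivity)]
  have : |fn g ω - fn (τ (Multiplicative.ofAdd (Pi.single i n)) g) ω| ≤ 2 * c := by
    refine (abs_sub _ _).trans (by linarith)
  calc _ ≤ 1 / (n : ℝ) * (2 * c) := by gcongr
    _ = _ := by ring

lemma W2_cob (τ : Multiplicative (Fin d → ℕ) →* Module.End ℝ (VL μ)) (hτ : ∀ κ, PDS (τ κ))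
    (i : Fin d) (g : Lp ℝ 2 μ) :
    g - U2 (hτ (Multiplicative.ofAdd (Pi.single i 1))) g ∈ W2 τ := by
  set U := U2 (hτ (Multiplicative.ofAdd (Pi.single i 1))) with hU
  have hcont : Continuous U := AddMonoidHomClass.continuous_of_bound U 1 fun x => by
    rw [one_mul]; exact U2_norm _ x
  have hcl : IsClosed {x : Lp ℝ 2 μ | x - U x ∈ W2 τ} :=
    (W2_closed τ hτ).preimage (continuous_id.sub hcont)
  refine (Lp.simpleFunc.denseRange (E := ℝ) (p := 2) (μ := μ) (by norm_num)).induction_on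
    (p := fun x => x - U x ∈ W2 τ) g hcl fun s => ?_
  obtain ⟨c, hc⟩ := (Lp.simpleFunc.toSimpleFunc s).exists_forall_norm_le
  have hb : ∀ᵐ ω ∂μ, |fn (J2 μ (s : Lp ℝ 2 μ)) ω| ≤ |c| := by
    filter_upwards [Lp.simpleFunc.toSimpleFunc_eq_toFun s] with ω a
    rw [J2_fn, ← a, ← Real.norm_eq_abs]
    exact (hc ω).trans (le_abs_self _)
  refine AuC.of_small fun ε hε => ?_
  obtain ⟨N, hN⟩ := exists_nat_gt (2 * |c| / ε)
  refine ⟨N + 1, fun n hn => ?_⟩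
  have hn0 : 0 < n := by omega
  have hn' : (0 : ℝ) < n := by exact_mod_cast hn0
  have hNn : (N : ℝ) ≤ n := by exact_mod_cast (by omega : N ≤ n)
  filter_upwards [cobdry τ hτ i (abs_nonneg c) hb hn0] with ω a
  refine le_trans (le_of_eq ?_) (a.trans ?_)
  · rfl
  · rw [div_lt_iff₀ hε] at hN
    rw [div_le_iff₀ hn']
    nlinarith

lemma fixed_all (τ : Multiplicative (Fin d → ℕ) →* Module.End ℝ (VL μ)) {v : VL μ}
    (h : ∀ i, τ (Multiplicative.ofAdd (Pi.single i 1)) v = v) (κ : Fin d → ℕ) :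
    τ (Multiplicative.ofAdd κ) v = v := by
  let M : AddSubmonoid (Fin d → ℕ) :=
    { carrier := {κ | τ (Multiplicative.ofAdd κ) v = v}
      zero_mem' := by simp
      add_mem' := by
        intro a b ha hb
        simp only [mem_setOf_eq] at ha hb ⊢
        rw [ofAdd_add, map_mul, Module.End.mul_apply, hb, ha] }
  have : κ ∈ M := by
    rw [← Finset.univ_sum_single κ]
    refine M.sum_mem fun i _ => ?_
    have : (Pi.single i (κ i) : Fin d → ℕ) = κ i • Pi.single i 1 := by
      rw [← Pi.single_smul]; simp
    rw [this]
    exact M.nsmul_mem (h i) _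
  exact this

lemma Dn_fixed (τ : Multiplicative (Fin d → ℕ) →* Module.End ℝ (VL μ)) {v : VL μ}
    (h : ∀ i, τ (Multiplicative.ofAdd (Pi.single i 1)) v = v) {n : ℕ} (hn : 0 < n) :
    Dn τ n v = v := by
  have hn' : (0 : ℝ) < n := by exact_mod_cast hn
  rw [Dn, LinearMap.sum_apply]
  simp only [LinearMap.smul_apply, fixed_all τ h, Finset.sum_const, Fintype.card_piFinset,
    Finset.card_range, Finset.prod_const, Finset.card_univ, Fintype.card_fin]
  rw [← Nat.cast_smul_eq_nsmul ℝ, smul_smul, Nat.cast_pow, ← mul_pow, mul_one_div_cancel hn'.ne',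
    one_pow, one_smul]

lemma W2_top (τ : Multiplicative (Fin d → ℕ) →* Module.End ℝ (VL μ)) (hτ : ∀ κ, PDS (τ κ)) :
    W2 τ = ⊤ := by
  haveI : CompleteSpace (W2 τ) := (W2_closed τ hτ).completeSpace_coe
  rw [← Submodule.orthogonal_eq_bot_iff]
  rw [eq_bot_iff]
  intro h hh
  have hfix : ∀ i, U2 (hτ (Multiplicative.ofAdd (Pi.single i 1))) h = h := by
    intro i
    set U := U2 (hτ (Multiplicative.ofAdd (Pi.single i 1))) with hU
    have h1 : inner ℝ (h - U h) h = 0 := (Submodule.mem_orthogonal _ _).1 hh _ (W2_cob τ hτ i h)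
    rw [inner_sub_left, real_inner_self_eq_norm_sq] at h1
    have h2 := U2_norm (hτ (Multiplicative.ofAdd (Pi.single i 1))) h
    rw [← hU] at h2
    have h3 := norm_sub_sq_real (U h) h
    have h4 : ‖U h - h‖ ^ 2 ≤ 0 := by
      nlinarith [norm_nonneg (U h)]
    have h5 : ‖U h - h‖ = 0 := by nlinarith [norm_nonneg (U h - h)]
    exact sub_eq_zero.1 (norm_eq_zero.1 h5)
  have hW : h ∈ W2 τ := by
    refine AuC.of_const (fn (J2 μ h)) 1 fun n hn => ?_
    rw [Dn_fixed τ (fun i => ?_) hn]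
    rw [← J2_U2 (hτ _), hfix]
  have := (Submodule.mem_orthogonal _ _).1 hh h hW
  simpa using this

lemma auC_L2 (τ : Multiplicative (Fin d → ℕ) →* Module.End ℝ (VL μ)) (hτ : ∀ κ, PDS (τ κ))
    {q : VL μ} (hq : MemLp (fn q) 2 μ) : AuC μ fun n : ℕ => fn (Dn τ n q) := by
  let x : Lp ℝ 2 μ := ⟨q, Lp.mem_Lp_iff_memLp.2 hq⟩
  have : x ∈ W2 τ := by rw [W2_top τ hτ]; trivial
  exact this

end

end

section
section
variable {μ : Measure Ω} {d : ℕ}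

lemma lp_ordmod (μ : Measure Ω) : IsOrderedModule ℝ (Lp ℝ 1 μ) := by
  have h : ∀ (c : ℝ) (x : Lp ℝ 1 μ), 0 ≤ c → 0 ≤ x → 0 ≤ c • x := by
    intro c x hc hx
    rw [← Lp.coeFn_nonneg] at hx ⊢
    filter_upwards [hx, Lp.coeFn_smul c x] with ω a b
    rw [b]
    exact mul_nonneg hc a
  exact
    { smul_le_smul_of_nonneg_left := fun a ha x y hxy => by
        rw [← sub_nonneg, ← smul_sub]
        exact h _ _ ha (sub_nonneg.2 hxy)
      smul_le_smul_of_nonneg_right := fun x hx a b hab => by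
        rw [← sub_nonneg, ← sub_smul]
        exact h _ _ (sub_nonneg.2 hab) hx }

/-- inclusion of L¹ -/
noncomputable def J1 (μ : Measure Ω) : Lp ℝ 1 μ →ₗ[ℝ] VL μ where
  toFun x := ⟨x, memL1pLinf_of_one (Lp.eLpNorm_ne_top x)⟩
  map_add' _ _ := rfl
  map_smul' _ _ := rfl

lemma J1_fn (x : Lp ℝ 1 μ) : fn (J1 μ x) = ⇑x := rfl

/-- L¹ restriction -/
noncomputable def L1op {T : (Ω →ₘ[μ] ℝ) → (Ω →ₘ[μ] ℝ)} (hT : IsPosDS μ T) :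
    Lp ℝ 1 μ →L[ℝ] Lp ℝ 1 μ :=
  LinearMap.mkContinuous
    { toFun := fun x => ⟨T x, Lp.mem_Lp_iff_eLpNorm_lt_top.2
        ((hT.norm_one x (J1 μ x).2).trans_lt (Lp.eLpNorm_lt_top x))⟩
      map_add' := fun x y => Subtype.ext (hT.map_add _ _ (J1 μ x).2 (J1 μ y).2)
      map_smul' := fun c x => Subtype.ext (hT.map_smul c _ (J1 μ x).2) } 1 (fun x => by
        rw [one_mul, Lp.norm_def, Lp.norm_def]
        exact ENNReal.toReal_mono (Lp.eLpNorm_ne_top x) (hT.norm_one x (J1 μ x).2))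

lemma L1op_coe {T : (Ω →ₘ[μ] ℝ) → (Ω →ₘ[μ] ℝ)} (hT : IsPosDS μ T) (x : Lp ℝ 1 μ) :
    (L1op hT x : Ω →ₘ[μ] ℝ) = T x := rfl

lemma J1_L1op {T : (Ω →ₘ[μ] ℝ) → (Ω →ₘ[μ] ℝ)} (hT : IsPosDS μ T) (x : Lp ℝ 1 μ) :
    J1 μ (L1op hT x) = toEnd hT (J1 μ x) := rfl

lemma L1op_norm {T : (Ω →ₘ[μ] ℝ) → (Ω →ₘ[μ] ℝ)} (hT : IsPosDS μ T) (x : Lp ℝ 1 μ) :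
    ‖L1op hT x‖ ≤ ‖x‖ := by
  rw [Lp.norm_def, Lp.norm_def]
  exact ENNReal.toReal_mono (Lp.eLpNorm_ne_top x) (hT.norm_one x (J1 μ x).2)

/-- the hypotheses -/
structure DSFlow (μ : Measure Ω) {d : ℕ} (T : (Fin d → ℝ) → (Ω →ₘ[μ] ℝ) → (Ω →ₘ[μ] ℝ))
    (A : ℝ → (Ω →ₘ[μ] ℝ) → (Ω →ₘ[μ] ℝ)) : Prop where
  hDS : ∀ u : Fin d → ℝ, 0 ≤ u → IsPosDS μ (T u)
  hsemi : ∀ u v : Fin d → ℝ, 0 ≤ u → 0 ≤ v →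
      ∀ f : Ω →ₘ[μ] ℝ, MemL1pLinf μ f → T (u + v) f = T u (T v f)
  hcont : ∀ f : Ω →ₘ[μ] ℝ, eLpNorm f 1 μ ≠ ∞ → ∀ v : Fin d → ℝ, (∀ i, 0 < v i) →
      Tendsto (fun u => eLpNorm (⇑(T u f - T v f)) 1 μ)
        (𝓝[{u : Fin d → ℝ | 0 ≤ u}] v) (𝓝 0)
  hA_DS : ∀ t : ℝ, 0 < t → IsPosDS μ (A t)
  hA_agree : ∀ t : ℝ, 0 < t → ∀ g : Lp ℝ 1 μ,
      ∀ F : (Fin d → ℝ) → Lp ℝ 1 μ, (∀ u : Fin d → ℝ, 0 ≤ u → (F u : Ω →ₘ[μ] ℝ) = T u g) →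
        A t (g : Ω →ₘ[μ] ℝ) =
          (t ^ d)⁻¹ •
            ((∫ u in Set.univ.pi fun _ : Fin d => Set.Ioc (0 : ℝ) t, F u : Lp ℝ 1 μ) :
              Ω →ₘ[μ] ℝ)

variable {T : (Fin d → ℝ) → (Ω →ₘ[μ] ℝ) → (Ω →ₘ[μ] ℝ)} {A : ℝ → (Ω →ₘ[μ] ℝ) → (Ω →ₘ[μ] ℝ)}

open Classical in
/-- orbit -/
noncomputable def DSFlow.orb (H : DSFlow μ T A) (g : Lp ℝ 1 μ) (u : Fin d → ℝ) : Lp ℝ 1 μ :=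
  if h : 0 ≤ u then L1op (H.hDS u h) g else 0

lemma DSFlow.orb_eq (H : DSFlow μ T A) (g : Lp ℝ 1 μ) {u : Fin d → ℝ} (h : 0 ≤ u) :
    H.orb g u = L1op (H.hDS u h) g := by rw [DSFlow.orb, dif_pos h]

lemma DSFlow.orb_coe (H : DSFlow μ T A) (g : Lp ℝ 1 μ) {u : Fin d → ℝ} (h : 0 ≤ u) :
    (H.orb g u : Ω →ₘ[μ] ℝ) = T u g := by rw [H.orb_eq g h]; rfl

lemma DSFlow.orb_norm (H : DSFlow μ T A) (g : Lp ℝ 1 μ) (u : Fin d → ℝ) : ‖H.orb g u‖ ≤ ‖g‖ := by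
  rw [DSFlow.orb]; split_ifs
  · exact L1op_norm _ _
  · simp

lemma DSFlow.orb_nonneg (H : DSFlow μ T A) {g : Lp ℝ 1 μ} (hg : 0 ≤ g) (u : Fin d → ℝ) :
    0 ≤ H.orb g u := by
  rw [DSFlow.orb]; split_ifs with h
  · rw [← Lp.coeFn_nonneg] at hg ⊢
    exact (toEnd_pds (H.hDS u h)).pos (J1 μ g) hg
  · exact le_rfl

lemma DSFlow.orb_cont (H : DSFlow μ T A) (g : Lp ℝ 1 μ) :
    ContinuousOn (H.orb g) {u | ∀ i, 0 < u i} := by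
  intro v hv
  have h0 := H.hcont g (Lp.eLpNorm_ne_top g) v hv
  have h1 := h0.mono_left (nhdsWithin_mono v (show {u : Fin d → ℝ | ∀ i, 0 < u i} ⊆ {u | 0 ≤ u} from
    fun u hu i => (hu i).le))
  rw [ContinuousWithinAt, tendsto_iff_norm_sub_tendsto_zero]
  have h2 := (ENNReal.tendsto_toReal ENNReal.zero_ne_top).comp h1
  rw [ENNReal.toReal_zero] at h2
  refine h2.congr' ?_
  filter_upwards [self_mem_nhdsWithin] with u hu
  rw [Lp.norm_def, Function.comp]
  congr 2
  show _ = ⇑((H.orb g u - H.orb g v : Lp ℝ 1 μ) : Ω →ₘ[μ] ℝ)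
  rw [AddSubgroup.coe_sub, H.orb_coe g (fun i => (hu i).le), H.orb_coe g (fun i => (hv i).le)]

/-- boxes -/
def bx (d : ℕ) (a b : Fin d → ℝ) : Set (Fin d → ℝ) := Set.univ.pi fun i => Set.Ioc (a i) (b i)

lemma bx_meas (a b : Fin d → ℝ) : MeasurableSet (bx d a b) :=
  MeasurableSet.univ_pi fun _ => measurableSet_Ioc

lemma bx_pos {a b u : Fin d → ℝ} (ha : 0 ≤ a) (hu : u ∈ bx d a b) (i : Fin d) : 0 < u i :=
  (ha i).trans_lt (hu i (mem_univ i)).1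

lemma DSFlow.orb_int (H : DSFlow μ T A) (g : Lp ℝ 1 μ) {a : Fin d → ℝ} (ha : 0 ≤ a) (b : Fin d → ℝ) :
    IntegrableOn (H.orb g) (bx d a b) := by
  have hfin : volume (bx d a b) < ∞ := by
    rw [bx, Real.volume_pi_Ioc]; exact ENNReal.prod_lt_top fun i _ => ENNReal.ofReal_lt_top
  haveI : IsFiniteMeasure (volume.restrict (bx d a b)) := ⟨by simpa using hfin⟩
  refine Integrable.of_bound (C := ‖g‖) ?_ (Eventually.of_forall fun u => H.orb_norm g u)
  exact ((H.orb_cont g).mono fun u hu => bx_pos ha hu).aestronglyMeasurable (bx_meas a b)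

lemma DSFlow.orb_add (H : DSFlow μ T A) (g : Lp ℝ 1 μ) {u v : Fin d → ℝ} (hu : 0 ≤ u) (hv : 0 ≤ v) :
    H.orb g (u + v) = L1op (H.hDS u hu) (H.orb g v) := by
  apply Subtype.ext
  rw [H.orb_coe g (add_nonneg hu hv), L1op_coe, H.orb_coe g hv]
  exact H.hsemi u v hu hv _ (J1 μ g).2

/-- integral over unit cube at κ -/
lemma DSFlow.int_shift (H : DSFlow μ T A) (g : Lp ℝ 1 μ) {k : Fin d → ℝ} (hk : 0 ≤ k) :
    ∫ u in bx d k (k + 1), H.orb g u = L1op (H.hDS k hk) (∫ u in bx d 0 1, H.orb g u) := by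
  rw [← ContinuousLinearMap.integral_comp_comm _ (H.orb_int g le_rfl 1),
    ← integral_indicator (bx_meas _ _), ← integral_indicator (bx_meas _ _),
    ← integral_add_left_eq_self _ k]
  congr 1
  ext1 u
  have hiff : k + u ∈ bx d k (k + 1) ↔ u ∈ bx d 0 1 := by
    simp [bx, Set.mem_pi]
  by_cases hu : u ∈ bx d 0 1
  · rw [indicator_of_mem (hiff.2 hu), indicator_of_mem hu,
      H.orb_add g hk fun i => (bx_pos le_rfl hu i).le]
  · rw [indicator_of_notMem (fun h => hu (hiff.1 h)), indicator_of_notMem hu]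

lemma bx_split (n : ℕ) : bx d 0 (fun _ => (n : ℝ)) =
    ⋃ κ ∈ Fintype.piFinset fun _ : Fin d => Finset.range n,
      bx d (fun i => (κ i : ℝ)) ((fun i => (κ i : ℝ)) + 1) := by
  ext u
  simp only [bx, Set.mem_pi, mem_univ, forall_true_left, mem_Ioc, mem_iUnion, Pi.add_apply, Pi.one_apply,
    Fintype.mem_piFinset, Finset.mem_range, exists_prop, Pi.zero_apply]
  constructor
  · intro h
    refine ⟨fun i => ⌈u i⌉₊ - 1, fun i => ?_, fun i => ?_⟩
    · have h1 : ⌈u i⌉₊ ≤ n := Nat.ceil_le.2 (h i).2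
      have h2 : 0 < ⌈u i⌉₊ := Nat.ceil_pos.2 (h i).1
      show ⌈u i⌉₊ - 1 < n
      omega
    · have h2 : 0 < ⌈u i⌉₊ := Nat.ceil_pos.2 (h i).1
      have h3 := Nat.ceil_lt_add_one (h i).1.le
      have h4 := Nat.le_ceil (u i)
      have h5 : ((⌈u i⌉₊ - 1 : ℕ) : ℝ) = (⌈u i⌉₊ : ℝ) - 1 := by
        rw [Nat.cast_sub h2]; simp
      rw [h5]; constructor <;> linarith
  · rintro ⟨κ, h1, h2⟩ i
    refine ⟨(Nat.cast_nonneg _).trans_lt (h2 i).1, (h2 i).2.trans ?_⟩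
    exact_mod_cast h1 i

lemma bx_disj (s : Set (Fin d → ℕ)) : s.Pairwise (Function.onFun Disjoint fun κ =>
    bx d (fun i => (κ i : ℝ)) ((fun i => (κ i : ℝ)) + 1)) := by
  intro κ _ l _ hne
  rw [Function.onFun, Set.disjoint_left]
  intro u h1 h2
  apply hne
  ext i
  have a := h1 i (mem_univ i)
  have b := h2 i (mem_univ i)
  simp only [Pi.add_apply, Pi.one_apply, mem_Ioc] at a b
  have c : (κ i : ℝ) < l i + 1 := a.1.trans_le b.2
  have e : (l i : ℝ) < κ i + 1 := b.1.trans_le a.2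
  have c' : κ i < l i + 1 := by exact_mod_cast c
  have e' : l i < κ i + 1 := by exact_mod_cast e
  omega

lemma castnn (κ : Fin d → ℕ) : (0 : Fin d → ℝ) ≤ fun i => (κ i : ℝ) := fun i => Nat.cast_nonneg _

lemma DSFlow.int_n (H : DSFlow μ T A) (g : Lp ℝ 1 μ) (n : ℕ) :
    ∫ u in bx d 0 (fun _ => (n : ℝ)), H.orb g u =
      ∑ κ ∈ Fintype.piFinset fun _ : Fin d => Finset.range n,
        L1op (H.hDS _ (castnn κ)) (∫ u in bx d 0 1, H.orb g u) := by
  rw [bx_split, integral_biUnion_finset _ (fun κ _ => bx_meas _ _) (bx_disj _)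
    (fun κ _ => H.orb_int g (castnn κ) _)]
  exact Finset.sum_congr rfl fun κ _ => H.int_shift g (castnn κ)

open Classical in
/-- discrete semigroup -/
noncomputable def DSFlow.tau (H : DSFlow μ T A) : Multiplicative (Fin d → ℕ) →* Module.End ℝ (VL μ) where
  toFun κ := if κ = 1 then 1 else toEnd (H.hDS _ (castnn κ.toAdd))
  map_one' := by simp
  map_mul' a b := by
    by_cases ha : a = 1
    · simp [ha]
    by_cases hb : b = 1
    · simp [hb]
    have hab : a * b ≠ 1 := by
      intro h
      apply ha
      have h' : a.toAdd + b.toAdd = 0 := h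
      have : a.toAdd = 0 := by
        ext i
        have := congrFun h' i
        simp only [Pi.add_apply, Pi.zero_apply] at this ⊢
        omega
      exact this
    rw [if_neg ha, if_neg hb, if_neg hab]
    ext1 f
    apply Subtype.ext
    have := H.hsemi _ _ (castnn a.toAdd) (castnn b.toAdd) f f.2
    show T _ _ = T _ (T _ _)
    rw [← this]
    congr 1
    ext i; simp

lemma DSFlow.tau_pds (H : DSFlow μ T A) (κ) : PDS (H.tau κ) := by
  show PDS (ite _ _ _)
  split_ifs
  · exact PDS.id
  · exact toEnd_pds _

lemma DSFlow.tau_apply (H : DSFlow μ T A) (g : Lp ℝ 1 μ) (κ : Fin d → ℕ) :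
    H.tau (Multiplicative.ofAdd κ) (J1 μ (∫ u in bx d 0 1, H.orb g u)) =
      J1 μ (L1op (H.hDS _ (castnn κ)) (∫ u in bx d 0 1, H.orb g u)) := by
  by_cases hκ : κ = 0
  · subst hκ
    have h1 := H.int_shift g (castnn (0 : Fin d → ℕ))
    have h2 : (fun i => (((0 : Fin d → ℕ) i : ℕ) : ℝ)) = (0 : Fin d → ℝ) := by ext; simp
    rw [← h1]
    simp only [h2, zero_add]
    rw [ofAdd_zero, map_one]; rfl
  · rw [J1_L1op]
    show (ite _ _ _ : Module.End ℝ (VL μ)) _ = _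
    rw [if_neg (by exact hκ)]

open Classical in
/-- averages -/
noncomputable def DSFlow.av (H : DSFlow μ T A) (t : ℝ) : Module.End ℝ (VL μ) :=
  if h : 0 < t then toEnd (H.hA_DS t h) else 0

lemma DSFlow.av_eq (H : DSFlow μ T A) {t : ℝ} (h : 0 < t) : H.av t = toEnd (H.hA_DS t h) := by
  rw [DSFlow.av, dif_pos h]

lemma DSFlow.av_coe (H : DSFlow μ T A) {t : ℝ} (h : 0 < t) (f : VL μ) :
    (H.av t f : Ω →ₘ[μ] ℝ) = A t f := by
  rw [H.av_eq h]; rfl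

lemma DSFlow.av_pds (H : DSFlow μ T A) {t : ℝ} (h : 0 < t) : PDS (H.av t) := by
  rw [H.av_eq h]; exact toEnd_pds _

lemma DSFlow.av_J1 (H : DSFlow μ T A) {t : ℝ} (h : 0 < t) (g : Lp ℝ 1 μ) :
    H.av t (J1 μ g) = (t ^ d)⁻¹ • J1 μ (∫ u in bx d 0 (fun _ => t), H.orb g u) := by
  apply Subtype.ext
  rw [H.av_coe h]
  exact H.hA_agree t h g (H.orb g) fun u hu => H.orb_coe g hu

lemma DSFlow.av_nat (H : DSFlow μ T A) {n : ℕ} (hn : 0 < n) (g : Lp ℝ 1 μ) :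
    H.av n (J1 μ g) = Dn H.tau n (H.av 1 (J1 μ g)) := by
  have h1 : H.av 1 (J1 μ g) = J1 μ (∫ u in bx d 0 1, H.orb g u) := by
    rw [H.av_J1 one_pos, one_pow, inv_one, one_smul]; rfl
  rw [h1, H.av_J1 (by exact_mod_cast hn), H.int_n, map_sum, Finset.smul_sum, Dn, LinearMap.sum_apply]
  refine Finset.sum_congr rfl fun κ _ => ?_
  rw [LinearMap.smul_apply, H.tau_apply, one_div, inv_pow]

lemma DSFlow.av_mono (H : DSFlow μ T A) {g : Lp ℝ 1 μ} (hg : 0 ≤ g) {s t : ℝ} (hs : 0 < s) (hst : s ≤ t) :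
    ∀ᵐ ω ∂μ, s ^ d * fn (H.av s (J1 μ g)) ω ≤ t ^ d * fn (H.av t (J1 μ g)) ω := by
  haveI := lp_ordmod μ
  have ht := hs.trans_le hst
  have h1 : (∫ u in bx d 0 (fun _ => s), H.orb g u) ≤ ∫ u in bx d 0 (fun _ => t), H.orb g u := by
    refine setIntegral_mono_set (H.orb_int g le_rfl _)
      (Eventually.of_forall fun u => H.orb_nonneg hg u) (HasSubset.Subset.eventuallyLE ?_)
    intro u hu i hi
    exact ⟨(hu i hi).1, (hu i hi).2.trans hst⟩
  rw [← Lp.coeFn_le] at h1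
  rw [H.av_J1 hs, H.av_J1 ht]
  filter_upwards [h1, fn_smul (s ^ d)⁻¹ (J1 μ (∫ u in bx d 0 (fun _ => s), H.orb g u)),
    fn_smul (t ^ d)⁻¹ (J1 μ (∫ u in bx d 0 (fun _ => t), H.orb g u))] with ω a b c
  rw [b, c, mul_inv_cancel_left₀ (by positivity), mul_inv_cancel_left₀ (by positivity)]
  exact a

end

end

section
section
variable {μ : Measure Ω} {d : ℕ}
variable {T : (Fin d → ℝ) → (Ω →ₘ[μ] ℝ) → (Ω →ₘ[μ] ℝ)} {A : ℝ → (Ω →ₘ[μ] ℝ) → (Ω →ₘ[μ] ℝ)}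

lemma norm_L1 (g : Lp ℝ 1 μ) : ∫⁻ ω, ENNReal.ofReal |g ω| ∂μ = ENNReal.ofReal ‖g‖ := by
  rw [Lp.norm_def, ENNReal.ofReal_toReal (Lp.eLpNorm_ne_top g), eLpNorm_one_eq_lintegral_enorm]
  exact lintegral_congr fun ω => (Real.enorm_eq_ofReal_abs _).symm

lemma PDS.L1 {U : Module.End ℝ (VL μ)} (hU : PDS U) (g : Lp ℝ 1 μ) :
    ∫⁻ ω, ENNReal.ofReal (fn (U (J1 μ |g|)) ω) ∂μ ≤ ENNReal.ofReal ‖g‖ := by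
  refine (hU.one _ ?_).trans (le_of_eq ?_)
  · filter_upwards [Lp.coeFn_abs g] with ω a
    rw [J1_fn, a]; exact abs_nonneg _
  · rw [← norm_L1]
    refine lintegral_congr_ae ?_
    filter_upwards [Lp.coeFn_abs g] with ω a
    rw [J1_fn, a]

lemma PDS.J1_abs {U : Module.End ℝ (VL μ)} (hU : PDS U) (g : Lp ℝ 1 μ) :
    ∀ᵐ ω ∂μ, |fn (U (J1 μ g)) ω| ≤ fn (U (J1 μ |g|)) ω := by
  refine hU.abs_le ?_
  filter_upwards [Lp.coeFn_abs g] with ω a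
  rw [J1_fn, J1_fn, a]

lemma DSFlow.max (H : DSFlow μ T A) (g : Lp ℝ 1 μ) {lam : ℝ} (hl : 0 < lam) :
    ∃ S : Set Ω, MeasurableSet S ∧ ENNReal.ofReal (cmax d / 2 ^ d * lam) * μ S ≤ ENNReal.ofReal ‖g‖ ∧
      ∀ t : ℝ, 1 ≤ t → ∀ᵐ ω ∂μ, ω ∉ S → |fn (H.av t (J1 μ g)) ω| ≤ lam := by
  have h1 := H.av_pds one_pos
  have hg0 : (0 : Lp ℝ 1 μ) ≤ |g| := abs_nonneg g
  have hgp : ∀ᵐ ω ∂μ, 0 ≤ fn (J1 μ |g|) ω := (Lp.coeFn_nonneg _).2 hg0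
  have hi := h1.L1 g
  obtain ⟨S, hS, hS1, hS2⟩ := maximal H.tau H.tau_pds (h1.pos _ hgp)
    (ne_top_of_le_ne_top ENNReal.ofReal_ne_top hi) (lam := lam / 2 ^ d) (by positivity)
  refine ⟨S, hS, ?_, fun t ht => ?_⟩
  · refine le_trans (le_of_eq ?_) (hS1.trans hi)
    congr 2; ring
  · have ht0 : 0 < t := by linarith
    set n := ⌊t⌋₊ + 1 with hn
    have hn1 : t ≤ n := by rw [hn]; push_cast; exact (Nat.lt_floor_add_one t).le
    have hn2 : (n : ℝ) ≤ 2 * t := by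
      rw [hn]; push_cast; linarith [Nat.floor_le ht0.le]
    have hm := H.av_mono hg0 ht0 hn1
    have hS3 := hS2 n (by omega)
    rw [← H.av_nat (by omega)] at hS3
    filter_upwards [hm, hS3, (H.av_pds ht0).J1_abs g] with ω a b c hω
    have b := b hω
    refine c.trans ?_
    have h2 : t ^ d * fn (H.av t (J1 μ |g|)) ω ≤ t ^ d * lam := by
      calc _ ≤ _ := a
        _ ≤ (n : ℝ) ^ d * (lam / 2 ^ d) := by gcongr
        _ ≤ (2 * t) ^ d * (lam / 2 ^ d) := by gcongr
        _ = t ^ d * lam := by rw [mul_pow]; field_simp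
    exact le_of_mul_le_mul_left h2 (by positivity)

lemma DSFlow.auC_pos (H : DSFlow μ T A) {g : Lp ℝ 1 μ} (hg : 0 ≤ g) {K : ℝ} (hK : 0 ≤ K)
    (hgK : ∀ᵐ ω ∂μ, g ω ≤ K) : AuC μ fun t : ℝ => fn (H.av t (J1 μ g)) := by
  have h1 := H.av_pds one_pos
  have hgp : ∀ᵐ ω ∂μ, 0 ≤ fn (J1 μ g) ω := (Lp.coeFn_nonneg _).2 hg
  have hL2 : MemLp (fn (H.av 1 (J1 μ g))) 2 μ := by
    rw [memL2_iff (fn_aesm _)]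
    calc _ ≤ ∫⁻ ω, ENNReal.ofReal K * ENNReal.ofReal (fn (H.av 1 (J1 μ g)) ω) ∂μ := by
          refine lintegral_mono_ae ?_
          filter_upwards [h1.pos _ hgp, h1.sub K hK (J1 μ g) hgK] with ω a b
          rw [← ENNReal.ofReal_mul hK]
          apply ENNReal.ofReal_le_ofReal; nlinarith
      _ = ENNReal.ofReal K * ∫⁻ ω, ENNReal.ofReal (fn (H.av 1 (J1 μ g)) ω) ∂μ :=
          lintegral_const_mul _ (fn_meas _).ennreal_ofReal
      _ < ∞ := by
          refine ENNReal.mul_lt_top ENNReal.ofReal_lt_top ?_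
          have := h1.L1 g
          rw [abs_of_nonneg hg] at this
          exact this.trans_lt ENNReal.ofReal_lt_top
  have hD := auC_L2 H.tau H.tau_pds hL2
  intro ε hε
  obtain ⟨S, hS, hSm, N0, hN0⟩ := hD (ε / 3) (by positivity)
  have htend : Tendsto (fun n : ℕ => ((1 + 1 / (n : ℝ)) ^ d - 1) * K) atTop (𝓝 0) := by
    have := (((tendsto_one_div_atTop_nhds_zero_nat (𝕜 := ℝ)).const_add 1).pow d).sub_const 1
    simpa using this.mul_const K
  obtain ⟨N1, hN1⟩ := eventually_atTop.1 (htend.eventually (gt_mem_nhds (show 0 < ε / 3 by positivity)))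
  refine ⟨S, hS, hSm.trans (ENNReal.ofReal_le_ofReal (by linarith)), (N0 + N1 + 1 : ℕ), ?_⟩
  have key : ∀ t : ℝ, ((N0 + N1 + 1 : ℕ) : ℝ) ≤ t → ∃ n : ℕ, N0 ≤ n ∧ ∀ᵐ ω ∂μ,
      fn (H.av t (J1 μ g)) ω ≤ fn (Dn H.tau (n + 1) (H.av 1 (J1 μ g))) ω + ε / 3 ∧
      fn (Dn H.tau n (H.av 1 (J1 μ g))) ω ≤ fn (H.av t (J1 μ g)) ω + ε / 3 := by
    intro t ht
    have ht0 : 0 < t := lt_of_lt_of_le (by positivity) ht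
    set n := ⌊t⌋₊ with hn
    have hnN : N0 + N1 + 1 ≤ n := Nat.le_floor ht
    have hn0 : 0 < n := by omega
    have hn0' : (0 : ℝ) < n := by exact_mod_cast hn0
    have a1 : (n : ℝ) ≤ t := Nat.floor_le ht0.le
    have a2 : t ≤ ((n + 1 : ℕ) : ℝ) := by push_cast; exact (Nat.lt_floor_add_one t).le
    have a2' : t ≤ (n : ℝ) + 1 := by exact_mod_cast a2
    have hρ := (hN1 n (by omega)).le
    refine ⟨n, by omega, ?_⟩
    rw [← H.av_nat hn0, ← H.av_nat (Nat.succ_pos n)]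
    have hn1 : (0 : ℝ) < ((n + 1 : ℕ) : ℝ) := by positivity
    filter_upwards [H.av_mono hg hn0' a1, H.av_mono hg ht0 a2, (H.av_pds ht0).sub K hK (J1 μ g) hgK,
      (H.av_pds hn1).sub K hK (J1 μ g) hgK, (H.av_pds ht0).pos _ hgp, (H.av_pds hn1).pos _ hgp]
      with ω b1 b2 b3 b4 b5 b6
    set ρ := (1 + 1 / (n : ℝ)) ^ d with hρd
    have hρ1 : 1 ≤ ρ := one_le_pow₀ (by linarith [show (0:ℝ) ≤ 1 / n by positivity])
    have e1 : ((n + 1 : ℕ) : ℝ) ^ d = ρ * (n : ℝ) ^ d := by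
      rw [hρd, ← mul_pow]; congr 1; push_cast; field_simp
    have c1 : t ^ d ≤ ρ * (n : ℝ) ^ d := by rw [← e1]; gcongr
    have c2 : ((n + 1 : ℕ) : ℝ) ^ d ≤ ρ * t ^ d := by rw [e1]; gcongr
    have d1 : fn (H.av t (J1 μ g)) ω ≤ ρ * fn (H.av ((n + 1 : ℕ) : ℝ) (J1 μ g)) ω := by
      refine le_of_mul_le_mul_left (a := t ^ d) ?_ (by positivity)
      calc _ ≤ _ := b2
        _ ≤ (ρ * t ^ d) * fn (H.av ((n + 1 : ℕ) : ℝ) (J1 μ g)) ω := by gcongr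
        _ = _ := by ring
    have d2 : fn (H.av (n : ℝ) (J1 μ g)) ω ≤ ρ * fn (H.av t (J1 μ g)) ω := by
      refine le_of_mul_le_mul_left (a := (n : ℝ) ^ d) ?_ (by positivity)
      calc _ ≤ _ := b1
        _ ≤ (ρ * (n : ℝ) ^ d) * fn (H.av t (J1 μ g)) ω := by gcongr
        _ = _ := by ring
    constructor <;> nlinarith
  intro s hs t ht
  obtain ⟨n, hn, h2⟩ := key s hs
  obtain ⟨m, hm, h3⟩ := key t ht
  filter_upwards [h2, h3, hN0 (n + 1) (by omega) m hm, hN0 (m + 1) (by omega) n hn]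
    with ω ⟨a1, a2⟩ ⟨b1, b2⟩ c1 c2 hω
  have c1 := abs_le.1 (c1 hω)
  have c2 := abs_le.1 (c2 hω)
  rw [abs_le]; constructor <;> linarith

lemma DSFlow.auC_bdd (H : DSFlow μ T A) {g : Lp ℝ 1 μ} {K : ℝ} (hK : 0 ≤ K)
    (hgK : ∀ᵐ ω ∂μ, |g ω| ≤ K) : AuC μ fun t : ℝ => fn (H.av t (J1 μ g)) := by
  have h1 := H.auC_pos (abs_nonneg g) hK (by
    filter_upwards [Lp.coeFn_abs g, hgK] with ω a b; rwa [a])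
  have h2 := H.auC_pos (g := |g| - g) (sub_nonneg.2 (le_abs_self g)) (K := 2 * K) (by positivity) (by
    filter_upwards [Lp.coeFn_abs g, hgK, Lp.coeFn_sub |g| g] with ω a b c
    rw [c, Pi.sub_apply, a]; linarith [neg_le_abs (g ω)])
  refine AuC.add h1 (AuC.smul h2 (-1) fun t => ae_eq_refl _) fun t => ?_
  rw [map_sub, map_sub]
  filter_upwards [fn_sub (H.av t (J1 μ |g|)) (H.av t (J1 μ g))] with ω a
  rw [a]; ring

/-- decomposition of elements of `R_μ` -/
lemma Rmu_decomp {f : VL μ} (hf : ∀ lam : ℝ, 0 < lam → μ {ω | lam < |fn f ω|} < ∞) {ε : ℝ} (hε : 0 < ε) :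
    ∃ g : Lp ℝ 1 μ, ∀ᵐ ω ∂μ, |fn (f - J1 μ g) ω| ≤ ε := by
  set E := {ω | ε < |fn f ω|} with hE
  have hEm : MeasurableSet E := measurableSet_lt measurable_const (fn_meas f).abs
  have hint : Integrable (E.indicator (fn f)) μ := by
    obtain ⟨a, b, ha, hb, hab⟩ := f.2
    have hai : Integrable a μ := memLp_one_iff_integrable.1 ⟨a.aestronglyMeasurable, ha.lt_top⟩
    have hbi : MemLp b ⊤ μ := ⟨b.aestronglyMeasurable, hb.lt_top⟩
    haveI : IsFiniteMeasure (μ.restrict E) := ⟨by simpa using hf ε hε⟩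
    have hbE : Integrable b (μ.restrict E) :=
      memLp_one_iff_integrable.1 ((hbi.restrict E).mono_exponent le_top)
    rw [integrable_indicator_iff hEm]
    refine (hai.integrableOn.add hbE).congr (ae_restrict_of_ae ?_)
    have : fn f =ᵐ[μ] a + b := by
      show ⇑(f : Ω →ₘ[μ] ℝ) =ᵐ[μ] _
      rw [hab]; exact AEEqFun.coeFn_add _ _
    exact this.symm
  refine ⟨hint.toL1 _, ?_⟩
  filter_upwards [fn_sub f (J1 μ (hint.toL1 _)), hint.coeFn_toL1] with ω a b
  rw [a, J1_fn, b]
  by_cases hω : ω ∈ E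
  · rw [indicator_of_mem hω]; simpa using hε.le
  · rw [indicator_of_notMem hω, sub_zero]
    exact not_lt.1 hω

lemma DSFlow.auC_Rmu (H : DSFlow μ T A) {f : VL μ}
    (hf : ∀ lam : ℝ, 0 < lam → μ {ω | lam < |fn f ω|} < ∞) :
    AuC μ fun t : ℝ => fn (H.av t f) := by
  refine AuC.approx fun ε hε => ?_
  obtain ⟨g, hg⟩ := Rmu_decomp hf (show 0 < ε / 2 by positivity)
  have hc : 0 < cmax d / 2 ^ d * (ε / 2) * ε := by have := cmax_pos d; positivity
  obtain ⟨s, hs⟩ := (Lp.simpleFunc.denseRange (E := ℝ) (p := 1) (μ := μ) (by norm_num)).exists_dist_lt g hc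
  obtain ⟨c, hc'⟩ := (Lp.simpleFunc.toSimpleFunc s).exists_forall_norm_le
  have hb : ∀ᵐ ω ∂μ, |(s : Lp ℝ 1 μ) ω| ≤ |c| := by
    filter_upwards [Lp.simpleFunc.toSimpleFunc_eq_toFun s] with ω a
    rw [← a, ← Real.norm_eq_abs]
    exact (hc' ω).trans (le_abs_self _)
  refine ⟨_, H.auC_bdd (abs_nonneg c) hb, ?_⟩
  obtain ⟨S, hS, h1, h2⟩ := H.max (g - s) (show 0 < ε / 2 by positivity)
  refine ⟨S, hS, ?_, 1, fun t ht => ?_⟩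
  · rw [dist_eq_norm] at hs
    have h4 := h1.trans (ENNReal.ofReal_le_ofReal hs.le)
    have hp : 0 < cmax d / 2 ^ d * (ε / 2) := by have := cmax_pos d; positivity
    rw [ENNReal.ofReal_mul hp.le] at h4
    exact (ENNReal.mul_le_mul_iff_right (by simpa using hp) ENNReal.ofReal_ne_top).1 h4
  · have ht0 : (0 : ℝ) < t := by have : (1 : ℝ) ≤ t := ht; linarith
    have e : H.av t f - H.av t (J1 μ s) = H.av t (J1 μ (g - s)) + H.av t (f - J1 μ g) := by
      simp only [map_sub]; abel
    filter_upwards [h2 t ht, (H.av_pds ht0).abs_sub (by positivity) hg,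
      fn_sub (H.av t f) (H.av t (J1 μ s)), fn_add (H.av t (J1 μ (g - s))) (H.av t (f - J1 μ g))]
      with ω a1 a2 a3 a4 hω
    rw [← a3, e, a4]
    refine (abs_add_le _ _).trans ?_
    linarith [a1 hω]

lemma DSFlow.lim_Rmu (H : DSFlow μ T A) {f : VL μ}
    (hf : ∀ lam : ℝ, 0 < lam → μ {ω | lam < |fn f ω|} < ∞) {φ : Ω → ℝ}
    (hlim : ∀ᵐ ω ∂μ, Tendsto (fun n : ℕ => fn (H.av n f) ω) atTop (𝓝 (φ ω))) {ε : ℝ} (hε : 0 < ε) :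
    ∫⁻ ω, ENNReal.ofReal (|φ ω| - ε) ∂μ < ∞ := by
  obtain ⟨g, hg⟩ := Rmu_decomp hf hε
  calc ∫⁻ ω, ENNReal.ofReal (|φ ω| - ε) ∂μ
      = ∫⁻ ω, liminf (fun n : ℕ => ENNReal.ofReal (|fn (H.av ((n + 1 : ℕ) : ℝ) f) ω| - ε)) atTop ∂μ := by
        refine lintegral_congr_ae ?_
        filter_upwards [hlim] with ω a
        refine (Tendsto.liminf_eq ?_).symm
        exact ENNReal.tendsto_ofReal ((((tendsto_add_atTop_iff_nat 1).2 a).abs).sub_const ε)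
    _ ≤ liminf (fun n : ℕ => ∫⁻ ω, ENNReal.ofReal (|fn (H.av ((n + 1 : ℕ) : ℝ) f) ω| - ε) ∂μ) atTop :=
        lintegral_liminf_le fun n => ((fn_meas _).abs.sub_const ε).ennreal_ofReal
    _ ≤ liminf (fun _ : ℕ => ENNReal.ofReal ‖g‖) atTop := by
        refine liminf_le_liminf (Eventually.of_forall fun n => ?_)
        have hn : (0 : ℝ) < ((n + 1 : ℕ) : ℝ) := by positivity
        refine (lintegral_mono_ae ?_).trans ((H.av_pds hn).L1 g)
        filter_upwards [(H.av_pds hn).abs_sub hε.le hg, (H.av_pds hn).J1_abs g,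
          fn_sub (H.av ((n + 1 : ℕ) : ℝ) f) (H.av ((n + 1 : ℕ) : ℝ) (J1 μ g))] with ω a b c
        rw [map_sub, c] at a
        apply ENNReal.ofReal_le_ofReal
        have := abs_sub_abs_le_abs_sub (fn (H.av ((n + 1 : ℕ) : ℝ) f) ω) (fn (H.av ((n + 1 : ℕ) : ℝ) (J1 μ g)) ω)
        linarith
    _ = ENNReal.ofReal ‖g‖ := by simp
    _ < ∞ := ENNReal.ofReal_lt_top

lemma memR_of {φ : Ω → ℝ} (hm : Measurable φ)
    (h : ∀ ε : ℝ, 0 < ε → ∫⁻ ω, ENNReal.ofReal (|φ ω| - ε) ∂μ < ∞) :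
    MemRmu μ (AEEqFun.mk φ hm.aestronglyMeasurable) := by
  have hmk := AEEqFun.coeFn_mk φ (hm.aestronglyMeasurable (μ := μ))
  refine ⟨?_, fun lam hl => ?_⟩
  · set ψ : Ω → ℝ := fun ω => max (-1) (min 1 (φ ω)) with hψ
    have hψm : Measurable ψ := measurable_const.max (measurable_const.min hm)
    have hψ1 : ∀ ω, |ψ ω| ≤ 1 := fun ω => abs_le.2 ⟨le_max_left _ _, max_le (by norm_num) (min_le_left _ _)⟩
    have hdm : Measurable fun ω => φ ω - ψ ω := hm.sub hψm
    have hd : ∀ ω, |φ ω - ψ ω| = max 0 (|φ ω| - 1) := by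
      intro ω
      simp only [hψ]
      rcases le_total (φ ω) (-1) with h1 | h1
      · rw [min_eq_right (by linarith), max_eq_left h1, abs_of_nonpos (by linarith),
          abs_of_nonpos (by linarith), max_eq_right (by linarith)]; ring
      · rcases le_total (φ ω) 1 with h2 | h2
        · rw [min_eq_right h2, max_eq_right h1, sub_self, abs_zero, max_eq_left]
          linarith [abs_le.2 ⟨h1, h2⟩]
        · rw [min_eq_left h2, max_eq_right (by norm_num), abs_of_nonneg (by linarith),
            abs_of_nonneg (by linarith), max_eq_right (by linarith)]
    have hint : Integrable (fun ω => φ ω - ψ ω) μ := by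
      refine ⟨hdm.aestronglyMeasurable, ?_⟩
      rw [hasFiniteIntegral_iff_enorm]
      refine lt_of_le_of_lt (le_of_eq (lintegral_congr fun ω => ?_)) (h 1 one_pos)
      rw [Real.enorm_eq_ofReal_abs, hd, ENNReal.ofReal_max]; simp
    obtain ⟨a, ha⟩ := exists_fn_of_int hint
    obtain ⟨b, hb⟩ := exists_fn_of_bdd (μ := μ) hψm.aestronglyMeasurable (Eventually.of_forall hψ1)
    have : AEEqFun.mk φ hm.aestronglyMeasurable = ((a + b : VL μ) : Ω →ₘ[μ] ℝ) := by
      apply AEEqFun.ext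
      filter_upwards [hmk, ha, hb, fn_add a b] with ω x1 x2 x3 x4
      rw [x1]
      refine Eq.trans ?_ x4.symm
      rw [x2, x3]; ring
    rw [this]
    exact (a + b).2
  · have e : μ {ω | lam < |(AEEqFun.mk φ (hm.aestronglyMeasurable (μ := μ))) ω|} = μ {ω | lam < |φ ω|} := by
      refine measure_congr ?_
      filter_upwards [hmk] with ω a
      show (lam < _) = (lam < _)
      rw [a]
    rw [e]
    have hmar := meas_ge_le_lintegral_div (μ := μ) (f := fun ω => ENNReal.ofReal (|φ ω| - lam / 2))
      ((hm.abs.sub_const _).ennreal_ofReal.aemeasurable) (ε := ENNReal.ofReal (lam / 2))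
      (by simpa using hl) ENNReal.ofReal_ne_top
    refine lt_of_le_of_lt (measure_mono ?_) (hmar.trans_lt
      (ENNReal.div_lt_top (h (lam / 2) (by positivity)).ne (by simpa using hl)))
    intro ω hω
    have hω : lam < |φ ω| := hω
    exact ENNReal.ofReal_le_ofReal (by linarith)

lemma DSFlow.main (H : DSFlow μ T A) (f : Ω →ₘ[μ] ℝ) (hf : MemRmu μ f) :
    ∃ fhat : Ω →ₘ[μ] ℝ, MemRmu μ fhat ∧
      AuTendsto μ atTop (fun t : ℝ => A t f) fhat := by
  let f' : VL μ := ⟨f, hf.1⟩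
  have hf' : ∀ lam : ℝ, 0 < lam → μ {ω | lam < |fn f' ω|} < ∞ := hf.2
  obtain ⟨φ, hφ, hlim, hau⟩ := (H.auC_Rmu hf').complete fun t => fn_meas _
  refine ⟨AEEqFun.mk φ hφ.aestronglyMeasurable, memR_of hφ fun ε hε => H.lim_Rmu hf' hlim hε, ?_⟩
  intro ε hε
  obtain ⟨S, hS, hSm, hconv⟩ := hau ε hε
  refine ⟨Sᶜ, hS.compl, by simpa using hSm, ?_⟩
  rw [ENNReal.tendsto_nhds_zero]
  intro δ hδ
  obtain ⟨r, hr0, hr⟩ := ENNReal.lt_iff_exists_nnreal_btwn.1 hδ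
  have hr0' : (0 : ℝ) < r := by exact_mod_cast hr0
  obtain ⟨t0, ht0⟩ := hconv r hr0'
  filter_upwards [eventually_ge_atTop t0, eventually_gt_atTop 0] with t ht htp
  rw [eLpNorm_exponent_top]
  refine (eLpNormEssSup_le_of_ae_bound (C := (r : ℝ)) ?_).trans (by simpa using hr.le)
  have e : fn (H.av t f') = ⇑(A t f) := by
    show ⇑(H.av t f' : Ω →ₘ[μ] ℝ) = _
    rw [H.av_coe htp]
  filter_upwards [ht0 t ht, AEEqFun.coeFn_sub (A t f) (AEEqFun.mk φ hφ.aestronglyMeasurable),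
    AEEqFun.coeFn_mk φ (hφ.aestronglyMeasurable (μ := μ))] with ω a b c
  by_cases hω : ω ∈ S
  · rw [indicator_of_notMem (by simpa using hω), norm_zero]; exact hr0'.le
  · rw [indicator_of_mem (by simpa using hω), b, Pi.sub_apply, c, Real.norm_eq_abs, ← e]
    exact a hω

end

end

/-- **Commutative case of Theorem 5.12**: let `{T_u : u ∈ ℝ₊^d}` be a semigroup of
positive Dunford–Schwartz operators which is `L¹`-continuous in the interior of `ℝ₊^d`,
and let `A_t` be the (unique) positive Dunford–Schwartz extension to `L¹+L^∞` of the
Bochner integral average `t^{-d} ∫_{(0,t]^d} T_u(·) du` on `L¹(μ)`.  Then for every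
`f ∈ R_μ` the averages `A_t(f)` converge almost uniformly as `t → ∞` to some
`f̂ ∈ R_μ`. -/
theorem flow_averages_au_Rmu (μ : Measure Ω) [SigmaFinite μ] {d : ℕ}
    (T : (Fin d → ℝ) → (Ω →ₘ[μ] ℝ) → (Ω →ₘ[μ] ℝ))
    (hDS : ∀ u : Fin d → ℝ, 0 ≤ u → IsPosDS μ (T u))
    (hsemi : ∀ u v : Fin d → ℝ, 0 ≤ u → 0 ≤ v →
      ∀ f : Ω →ₘ[μ] ℝ, MemL1pLinf μ f → T (u + v) f = T u (T v f))
    (hcont : ∀ f : Ω →ₘ[μ] ℝ, eLpNorm f 1 μ ≠ ∞ → ∀ v : Fin d → ℝ, (∀ i, 0 < v i) →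
      Tendsto (fun u => eLpNorm (⇑(T u f - T v f)) 1 μ)
        (𝓝[{u : Fin d → ℝ | 0 ≤ u}] v) (𝓝 0))
    (A : ℝ → (Ω →ₘ[μ] ℝ) → (Ω →ₘ[μ] ℝ))
    (hA_DS : ∀ t : ℝ, 0 < t → IsPosDS μ (A t))
    (hA_agree : ∀ t : ℝ, 0 < t → ∀ g : Lp ℝ 1 μ,
      ∀ F : (Fin d → ℝ) → Lp ℝ 1 μ, (∀ u : Fin d → ℝ, 0 ≤ u → (F u : Ω →ₘ[μ] ℝ) = T u g) →
        A t (g : Ω →ₘ[μ] ℝ) =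
          (t ^ d)⁻¹ •
            ((∫ u in Set.univ.pi fun _ : Fin d => Set.Ioc (0 : ℝ) t, F u : Lp ℝ 1 μ) :
              Ω →ₘ[μ] ℝ))
    (f : Ω →ₘ[μ] ℝ) (hf : MemRmu μ f) :
    ∃ fhat : Ω →ₘ[μ] ℝ, MemRmu μ fhat ∧
      AuTendsto μ atTop (fun t : ℝ => A t f) fhat := by
  exact DSFlow.main ⟨hDS, hsemi, hcont, hA_DS, hA_agree⟩ f hf
end

section
/- Let X be a Banach space and let {T_u : u ∈ [0,∞)^d} be a semigroup of bounded linear operators on X (T_0 = I and T_{u+v} = T_u T_v) such that for a fixed x ∈ X the map u ↦ T_u(x) is Bochner integrable on (0,n]^d with respect to Lebesgue measure for every n ∈ ℕ. Let y = ∫_{(0,1]^d} T_u(x) du. Then for every n ∈ ℕ: ∫_{(0,n]^d} T_u(x) du = ∑_{i₁=0}^{n−1} ⋯ ∑_{i_d=0}^{n−1} T_{(1,0,…,0)}^{i₁} ⋯ T_{(0,…,0,1)}^{i_d} (y), where (1,0,…,0), …, (0,…,0,1) are the standard unit vectors of ℝ^d. -/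
open MeasureTheory Filter Set ENNReal Topology

theorem aux_list {X : Type*} [NormedAddCommGroup X]
    [NormedSpace ℝ X] {d : ℕ}
    (T : (Fin d → ℝ) → X →L[ℝ] X)
    (hT0 : T 0 = 1)
    (hsemi : ∀ u v : Fin d → ℝ, 0 ≤ u → 0 ≤ v → T (u + v) = T u * T v)
    (l : List (Fin d → ℝ)) (hl : ∀ u ∈ l, 0 ≤ u) : T l.sum = (l.map T).prod := by
  induction l with
  | nil => simpa using hT0
  | cons a l ih =>
    have h2 : ∀ u ∈ l, 0 ≤ u := fun u hu => hl u (List.mem_cons_of_mem _ hu)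
    rw [List.sum_cons, hsemi _ _ (hl a (by simp)) (List.sum_nonneg h2), ih h2]
    simp

theorem aux_prod {X : Type*} [NormedAddCommGroup X]
    [NormedSpace ℝ X] {d : ℕ}
    (T : (Fin d → ℝ) → X →L[ℝ] X)
    (hT0 : T 0 = 1)
    (hsemi : ∀ u v : Fin d → ℝ, 0 ≤ u → 0 ≤ v → T (u + v) = T u * T v)
    (k : Fin d → ℕ) :
    (List.ofFn fun j : Fin d => T (Pi.single j 1) ^ k j).prod = T (fun j => (k j : ℝ)) := by
  have h1 : ∀ (j : Fin d) (m : ℕ), T (Pi.single j 1) ^ m = T (Pi.single j (m : ℝ)) := by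
    intro j m
    induction m with
    | zero => simp [hT0]
    | succ m ih =>
      rw [pow_succ, ih, ← hsemi, ← Pi.single_add]
      · push_cast; rfl
      · simp
      · simp
  have h2 := aux_list T hT0 hsemi (List.ofFn fun j : Fin d => Pi.single j (k j : ℝ)) (by
    intro u hu
    rw [List.mem_ofFn] at hu
    obtain ⟨j, rfl⟩ := hu
    simp)
  rw [List.sum_ofFn, Finset.univ_sum_single (fun j => (k j : ℝ)), List.map_ofFn] at h2
  rw [h2]
  simp only [h1]
  rfl

theorem aux_cell (n : ℕ) (d : ℕ) :
    (Set.univ.pi fun _ : Fin d => Set.Ioc (0 : ℝ) n) =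
      ⋃ k ∈ Fintype.piFinset fun _ : Fin d => Finset.range n,
        Set.univ.pi fun j : Fin d => Set.Ioc (k j : ℝ) (k j + 1) := by
  ext u
  simp only [Set.mem_iUnion, Set.mem_pi, Set.mem_univ, true_imp_iff, Fintype.mem_piFinset,
    Finset.mem_range, Set.mem_Ioc, exists_prop]
  constructor
  · intro h
    refine ⟨fun j => ⌈u j⌉₊ - 1, fun j => ?_, fun j => ?_⟩
    · have h1 : 0 < ⌈u j⌉₊ := Nat.ceil_pos.2 (h j).1
      have h2 : ⌈u j⌉₊ ≤ n := Nat.ceil_le.2 (h j).2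
      show ⌈u j⌉₊ - 1 < n
      omega
    · have h1 : 0 < ⌈u j⌉₊ := Nat.ceil_pos.2 (h j).1
      have h3 := Nat.ceil_lt_add_one (h j).1.le
      have h4 := Nat.le_ceil (u j)
      rw [Nat.cast_sub h1]
      push_cast
      constructor <;> linarith
  · rintro ⟨k, hk, h⟩ j
    have h1 : (k j : ℝ) + 1 ≤ n := by exact_mod_cast hk j
    have h2 : (0 : ℝ) ≤ k j := by positivity
    exact ⟨by linarith [(h j).1], by linarith [(h j).2]⟩

/-- **Key identity in the proof of Theorem 5.10**: for a semigroup `{T_u : u ∈ [0,∞)^d}`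
of bounded linear operators on a Banach space `X` such that `u ↦ T_u x` is Bochner
integrable on `(0,n]^d` for every `n`, setting `y = ∫_{(0,1]^d} T_u x du` one has
`∫_{(0,n]^d} T_u x du = ∑_{i ∈ [0,n)^d} T_{e₁}^{i₁} ⋯ T_{e_d}^{i_d} y`. -/
theorem integral_box_eq_sum_iterates {X : Type*} [NormedAddCommGroup X]
    [NormedSpace ℝ X] [CompleteSpace X] {d : ℕ}
    (T : (Fin d → ℝ) → X →L[ℝ] X) (x : X)
    (hT0 : T 0 = 1)
    (hsemi : ∀ u v : Fin d → ℝ, 0 ≤ u → 0 ≤ v → T (u + v) = T u * T v)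
    (hInt : ∀ n : ℕ,
      IntegrableOn (fun u => T u x) (Set.univ.pi fun _ : Fin d => Set.Ioc (0 : ℝ) n) volume)
    (y : X) (hy : y = ∫ u in Set.univ.pi fun _ : Fin d => Set.Ioc (0 : ℝ) 1, T u x) :
    ∀ n : ℕ,
      (∫ u in Set.univ.pi fun _ : Fin d => Set.Ioc (0 : ℝ) n, T u x)
        = ∑ k ∈ Fintype.piFinset fun _ : Fin d => Finset.range n,
            (List.ofFn fun j : Fin d => T (Pi.single j 1) ^ k j).prod y := by
  intro n
  have hm : ∀ k : Fin d → ℕ, MeasurableSet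
      (Set.univ.pi fun j : Fin d => Set.Ioc (k j : ℝ) (k j + 1)) :=
    fun k => MeasurableSet.univ_pi fun _ => measurableSet_Ioc
  have hI := hInt n
  rw [aux_cell] at hI ⊢
  rw [integral_biUnion_finset _ (fun k _ => hm k)]
  · refine Finset.sum_congr rfl fun k _ => ?_
    rw [aux_prod T hT0 hsemi, hy]
    have hI1 := hInt 1
    rw [Nat.cast_one] at hI1
    rw [← ContinuousLinearMap.integral_comp_comm _ hI1]
    have hmp := measurePreserving_add_left (volume : Measure (Fin d → ℝ)) (fun j => (k j : ℝ))
    rw [← hmp.setIntegral_preimage_emb (measurableEmbedding_addLeft _)]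
    have hset : ((fun u => (fun j => (k j : ℝ)) + u) ⁻¹'
        (Set.univ.pi fun j : Fin d => Set.Ioc (k j : ℝ) (k j + 1))) =
        Set.univ.pi fun _ : Fin d => Set.Ioc (0 : ℝ) 1 := by
      ext u
      simp
    rw [hset]
    refine setIntegral_congr_fun (MeasurableSet.univ_pi fun _ => measurableSet_Ioc) ?_
    intro u hu
    simp only
    rw [hsemi _ _ (fun j => by simp) (fun j => (hu j (Set.mem_univ j)).1.le)]
    rfl
  · intro k _ l _ hkl
    rw [Function.onFun, Set.disjoint_left]
    intro u hu hv
    apply hkl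
    funext j
    have a := hu j (Set.mem_univ j)
    have b := hv j (Set.mem_univ j)
    have h1 : (k j : ℝ) < l j + 1 := a.1.trans_le b.2
    have h2 : (l j : ℝ) < k j + 1 := b.1.trans_le a.2
    have h3 : k j < l j + 1 := by exact_mod_cast h1
    have h4 : l j < k j + 1 := by exact_mod_cast h2
    omega
  · intro k hk
    exact hI.mono_set (Set.subset_biUnion_of_mem (u := fun k : Fin d → ℕ =>
      Set.univ.pi fun j : Fin d => Set.Ioc (k j : ℝ) (k j + 1)) hk)
end

section
/- Let (Ω, 𝒜, μ) be a σ-finite measure space and let f be a measurable function belonging to L¹(μ)+L^∞(μ) (i.e. f = g + h with g ∈ L¹(μ), h ∈ L^∞(μ)). Then the following are equivalent: (i) μ{ |f| > λ } < ∞ for every λ > 0; (ii) for every ε > 0 there exists φ ∈ L¹(μ) ∩ L^∞(μ) and a decomposition f − φ = u + v with u ∈ L¹(μ), v ∈ L^∞(μ) and ‖u‖₁ + ‖v‖_∞ ≤ ε. In other words, R_μ is the closure of L¹(μ) ∩ L^∞(μ) in L¹(μ)+L^∞(μ) with respect to the norm ‖f‖_{L¹+L^∞} = inf{ ‖u‖₁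 + ‖v‖_∞ : f = u + v, u ∈ L¹(μ), v ∈ L^∞(μ) }. -/
open MeasureTheory Filter Set ENNReal Topology

variable {Ω : Type*} [MeasurableSpace Ω]

/-- **Commutative case of Proposition 2.1**: for `f ∈ L¹(μ)+L^∞(μ)` the following are
equivalent: (i) `μ{|f| > λ} < ∞` for every `λ > 0`; (ii) `f` can be approximated in the
`L¹+L^∞`-norm by elements of `L¹(μ) ∩ L^∞(μ)`.  That is, `R_μ` is the closure of
`L¹ ∩ L^∞` in `L¹ + L^∞`. -/
theorem memRmu_iff_approx (μ : Measure Ω) [SigmaFinite μ]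
    (f : Ω →ₘ[μ] ℝ)
    (hf : ∃ g h : Ω →ₘ[μ] ℝ, eLpNorm g 1 μ ≠ ∞ ∧ eLpNorm h ⊤ μ ≠ ∞ ∧ f = g + h) :
    (∀ lam : ℝ, 0 < lam → μ {ω | lam < |f ω|} < ∞) ↔
      (∀ ε : ℝ, 0 < ε → ∃ φ : Ω →ₘ[μ] ℝ,
        eLpNorm φ 1 μ ≠ ∞ ∧ eLpNorm φ ⊤ μ ≠ ∞ ∧
        ∃ u v : Ω →ₘ[μ] ℝ, f - φ = u + v ∧
          eLpNorm u 1 μ + eLpNorm v ⊤ μ ≤ ENNReal.ofReal ε) := by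
  constructor
  · intro H ε hε
    obtain ⟨g, h, hg, hh, hfgh⟩ := hf
    have hg1 : MemLp (g : Ω → ℝ) 1 μ := ⟨g.aestronglyMeasurable, lt_top_iff_ne_top.2 hg⟩
    have hh1 : MemLp (h : Ω → ℝ) ⊤ μ := ⟨h.aestronglyMeasurable, lt_top_iff_ne_top.2 hh⟩
    have hfm : Measurable (f : Ω → ℝ) := f.stronglyMeasurable.measurable
    set A : Set Ω := {ω | ε / 2 < |f ω|} with hA
    have hAm : MeasurableSet A := measurableSet_lt measurable_const hfm.abs
    have hAfin : μ A < ∞ := H (ε / 2) (by positivity)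
    have hε2 : ENNReal.ofReal (ε / 2) ≠ 0 := by
      simpa using hε
    have hfA : MemLp (A.indicator (f : Ω → ℝ)) 1 μ := by
      rw [memLp_indicator_iff_restrict hAm]
      have : IsFiniteMeasure (μ.restrict A) := ⟨by simpa using hAfin⟩
      have h1 : MemLp (g : Ω → ℝ) 1 (μ.restrict A) := hg1.restrict A
      have h2 : MemLp (h : Ω → ℝ) 1 (μ.restrict A) := (hh1.restrict A).mono_exponent le_top
      refine (memLp_congr_ae ?_).2 (h1.add h2)
      apply ae_restrict_of_ae
      rw [hfgh]
      exact AEEqFun.coeFn_add g h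
    obtain ⟨s, hs, hs1⟩ := hfA.exists_simpleFunc_eLpNorm_sub_lt (by simp) hε2
    have hsm : AEStronglyMeasurable (s : Ω → ℝ) μ := s.aestronglyMeasurable
    have hum : AEStronglyMeasurable (A.indicator (f : Ω → ℝ) - (s : Ω → ℝ)) μ := hfA.1.sub hsm
    have hvm : AEStronglyMeasurable (Aᶜ.indicator (f : Ω → ℝ)) μ :=
      f.aestronglyMeasurable.indicator hAm.compl
    refine ⟨AEEqFun.mk s hsm, ?_, ?_, AEEqFun.mk _ hum, AEEqFun.mk _ hvm, ?_, ?_⟩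
    · rw [eLpNorm_congr_ae (AEEqFun.coeFn_mk _ hsm)]
      exact hs1.2.ne
    · rw [eLpNorm_congr_ae (AEEqFun.coeFn_mk _ hsm)]
      exact (s.memLp_top μ).2.ne
    · apply AEEqFun.ext
      filter_upwards [AEEqFun.coeFn_sub f (AEEqFun.mk s hsm), AEEqFun.coeFn_mk _ hsm,
        AEEqFun.coeFn_add (AEEqFun.mk _ hum) (AEEqFun.mk _ hvm), AEEqFun.coeFn_mk _ hum,
        AEEqFun.coeFn_mk _ hvm] with ω h1 h2 h3 h4 h5
      rw [h1, h3, Pi.sub_apply, Pi.add_apply, h2, h4, h5, Pi.sub_apply]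
      by_cases hω : ω ∈ A
      · simp [hω]
      · simp [hω]; ring
    · rw [eLpNorm_congr_ae (AEEqFun.coeFn_mk _ hum), eLpNorm_congr_ae (AEEqFun.coeFn_mk _ hvm)]
      have hv : eLpNorm (Aᶜ.indicator (f : Ω → ℝ)) ⊤ μ ≤ ENNReal.ofReal (ε / 2) := by
        rw [eLpNorm_exponent_top]
        refine eLpNormEssSup_le_of_ae_bound (Eventually.of_forall fun ω => ?_)
        by_cases hω : ω ∈ A
        · simp [hω]; positivity
        · simpa [hω] using not_lt.1 hω
      calc _ ≤ ENNReal.ofReal (ε / 2) + ENNReal.ofReal (ε / 2) := add_le_add hs.le hv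
        _ = ENNReal.ofReal ε := by
          rw [← ENNReal.ofReal_add (by positivity) (by positivity), add_halves]
  · intro H lam hlam
    obtain ⟨φ, hφ1, -, u, v, huv, hle⟩ := H (lam / 2) (by positivity)
    have hφ : MemLp (φ : Ω → ℝ) 1 μ := ⟨φ.aestronglyMeasurable, lt_top_iff_ne_top.2 hφ1⟩
    have hu : MemLp (u : Ω → ℝ) 1 μ := ⟨u.aestronglyMeasurable,
      (le_self_add.trans hle).trans_lt ENNReal.ofReal_lt_top⟩
    have hv : eLpNorm v ⊤ μ ≤ ENNReal.ofReal (lam / 2) := le_add_self.trans hle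
    have hvb : ∀ᵐ ω ∂μ, ‖v ω‖ ≤ lam / 2 := by
      filter_upwards [ae_le_eLpNormEssSup (f := (v : Ω → ℝ)) (μ := μ)] with ω hω
      rw [eLpNorm_exponent_top] at hv
      have := hω.trans hv
      rwa [← ofReal_norm, ENNReal.ofReal_le_ofReal_iff (by positivity)] at this
    have hint : Integrable ((φ : Ω → ℝ) + (u : Ω → ℝ)) μ := memLp_one_iff_integrable.1 (hφ.add hu)
    have hfin := hint.measure_norm_ge_lt_top (half_pos hlam)
    refine lt_of_le_of_lt (measure_mono_ae ?_) hfin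
    filter_upwards [hvb, AEEqFun.coeFn_sub f φ, AEEqFun.coeFn_add u v] with ω h1 h2 h3 h4
    rw [huv, h3, Pi.add_apply, Pi.sub_apply] at h2
    have h4' : lam < |f ω| := h4
    change lam / 2 ≤ ‖φ ω + u ω‖
    have : f ω = (φ ω + u ω) + v ω := by linarith
    rw [this] at h4'
    have := abs_add_le (φ ω + u ω) (v ω)
    rw [Real.norm_eq_abs] at *
    linarith
end
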